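/- Let H be an affine quasi-hereditary algebra over a field k with finite index poset (Π, ≤) and let V ∈ H-gmod. Then: (1) V has a Δ-filtration if and only if ext¹_H(V, ∇̄(π)) = 0 for all π ∈ Π; (2) V has a ∇̄-filtration if and only if ext¹_H(Δ(π), V) = 0 for all π ∈ Π. -/

import Mathlib

/-!
The four implications are proved by comparing graded `ext¹` with the ungraded `Ext¹` of the
underlying modules: since `H` is Noetherian, both vanish at the same time (`extZero_of_vanish`,
`vanish_of_extZero`), and the long exact sequences for `Ext` in `ModuleCat` become available. Write
`E¹(M, N)` for ungraded `Ext¹`.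

*Filtered modules satisfy the vanishing.* By hypothesis `E¹(Δ(σ), ∇̄(π)) = 0`. A `Δ`-filtration has
finitely many non-zero subquotients, because each one contributes to a space `hom(V, ∇̄(π))` and these
are finite-dimensional; so `E¹(V, ∇̄(π)) = 0` (`vanish_of_dFilt`). A `∇̄`-filtration `Φ` may be
infinite, but `Φ n` lives in arbitrarily high degrees, and extensions of `Δ(π)` by `V` split as soon
as they split modulo all `Φ n` (`vanish_of_pcFilt`).

*From vanishing to a `Δ`-filtration.* If `V ≠ 0` and `E¹(V, ∇̄(π)) = 0` for all `π`, choose `σ`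
minimal such that `L(σ)` is a quotient of `V`. The map `V → L(σ)` lifts to a surjection `V → Δ(σ)`
(`AHW.exists_to_std`), whose kernel satisfies the same vanishing condition because
`E²(Δ(σ), ∇̄(π)) = 0`. Iterating, the process stops since `∑ dim hom(V, ∇̄(π))` decreases
(`AHW.hasDFilt_of_vanish`).

*From vanishing to a `∇̄`-filtration.* If `X` is finite-dimensional and `E¹(Δ(π), X) = 0` for all
`π`, the dual argument works: choose `σ` minimal such that `L(σ)` is a submodule of `X` and extend
`L(σ) → X` to an embedding `∇̄(σ) → X` (`AHW.exists_from_pco`, `AHW.chain_of_finite`). A general `V`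
need not have simple submodules, so it is first cut into finite-dimensional pieces: every `V` with
`E¹(Δ(π), V) = 0` for all `π` has submodules `W` of finite codimension with `E¹(Δ(π), W) = 0`
that live in arbitrarily high degrees (`AHW.exists_trunc`, `AHW.exists_wt_bound`). To find `W`, the
weights are treated one at a time, from the largest to the smallest. If all weights `ρ > τ` occur in
`W'` in high degrees only, let `W ≤ W'` be the largest graded submodule in which `τ` occurs in
degrees `≥ d` only. Every non-zero submodule of `W'/W` has weight `τ`, so a non-zero map
`Δ(ρ) → W'/W` forces `τ ≤ ρ`; it lifts to `P(ρ) → W'`, and the lift factors through `Δ(ρ)` because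
the weights `> τ` of `W'` are out of reach. Hence `E¹(Δ(ρ), W) = 0` (`AHW.extZero_of_max`).
Applying this repeatedly gives a separated chain of submodules of `V` whose finite-dimensional
subquotients are filtered by proper costandard modules (`AHW.hasPCFilt_of_vanish`).
-/

open CategoryTheory

/-! ## Graded algebras (Laurentian) and the category `H`-gmod -/

/-- A `ℤ`-graded `k`-algebra. -/
structure GAlg (k : Type) [Field k] : Type 1 where
  carrier : Type
  [ring : Ring carrier]
  [alg : Algebra k carrier]
  grading : ℤ → Submodule k carrier
  internal : DirectSum.IsInternal grading
  one_mem : (1 : carrier) ∈ grading 0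
  mul_mem : ∀ {i j : ℤ} {a b : carrier},
    a ∈ grading i → b ∈ grading j → a * b ∈ grading (i + j)

attribute [instance] GAlg.ring GAlg.alg

variable {k : Type} [Field k]

namespace GAlg

/-- A graded algebra is Laurentian if the grading is bounded below and has
finite-dimensional components. -/
def Laurentian (A : GAlg k) : Prop :=
  (∃ N : ℤ, ∀ n : ℤ, n < N → A.grading n = ⊥) ∧
    ∀ n : ℤ, FiniteDimensional k (A.grading n)

/-- Property `(♠)`: there is a central `ℤ≥0`-graded subalgebra `Z ⊆ H_{≥0}` with
`Z₀ = k·1` such that `H` is finitely generated as a `Z`-module. -/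
def Spade (A : GAlg k) : Prop :=
  ∃ Z : ℤ → Submodule k A.carrier,
    (∀ n, Z n ≤ A.grading n) ∧
    (∀ n : ℤ, n < 0 → Z n = ⊥) ∧
    (Z 0 = Submodule.span k {(1 : A.carrier)}) ∧
    (∀ (i j : ℤ) (a b : A.carrier), a ∈ Z i → b ∈ Z j → a * b ∈ Z (i + j)) ∧
    (∀ (i : ℤ) (a : A.carrier), a ∈ Z i → ∀ h : A.carrier, a * h = h * a) ∧
    (∃ s : Finset A.carrier,
      AddSubgroup.closure
        {x : A.carrier | ∃ i : ℤ, ∃ z ∈ Z i, ∃ t ∈ s, x = z * t} = ⊤)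

end GAlg

/-- A finitely generated graded module over a graded algebra. -/
structure GMod (A : GAlg k) : Type 1 where
  carrier : Type
  [acg : AddCommGroup carrier]
  [mod : Module A.carrier carrier]
  [kmod : Module k carrier]
  [tower : IsScalarTower k A.carrier carrier]
  [scc : SMulCommClass k A.carrier carrier]
  grading : ℤ → Submodule k carrier
  internal : DirectSum.IsInternal grading
  smul_mem : ∀ {i j : ℤ} {a : A.carrier} {x : carrier},
    a ∈ A.grading i → x ∈ grading j → a • x ∈ grading (i + j)
  fg : Module.Finite A.carrier carrier

attribute [instance] GMod.acg GMod.mod GMod.kmod GMod.tower GMod.scc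

variable {A : GAlg k}

/-- The category `H`-gmod : morphisms are degree-preserving `H`-linear maps. -/
instance GMod.instCategory : Category (GMod A) where
  Hom M N := {f : M.carrier →ₗ[A.carrier] N.carrier //
    ∀ (i : ℤ) (x : M.carrier), x ∈ M.grading i → f x ∈ N.grading i}
  id M := ⟨LinearMap.id, fun _ _ h => h⟩
  comp f g := ⟨g.1.comp f.1, fun i x h => g.2 i _ (f.2 i x h)⟩
  id_comp f := Subtype.ext (LinearMap.ext fun _ => rfl)
  comp_id f := Subtype.ext (LinearMap.ext fun _ => rfl)
  assoc f g h := Subtype.ext (LinearMap.ext fun _ => rfl)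

/-- The grading shift `q^n`. -/
def GMod.shift (n : ℤ) (M : GMod A) : GMod A where
  carrier := M.carrier
  grading := fun i => M.grading (i - n)
  internal := by
    have h := (DirectSum.isInternal_submodule_iff_iSupIndep_and_iSup_eq_top
      M.grading).mp M.internal
    rw [DirectSum.isInternal_submodule_iff_iSupIndep_and_iSup_eq_top]
    refine ⟨h.1.comp (f := fun i : ℤ => i - n)
      (fun a b hab => by simp only [] at hab; omega), ?_⟩
    refine le_antisymm le_top ?_
    rw [← h.2]
    refine iSup_le fun i => ?_
    have hg : M.grading i = M.grading ((i + n) - n) := by norm_num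
    rw [hg]
    exact le_iSup (fun j : ℤ => M.grading (j - n)) (i + n)
  smul_mem := fun {i j a x} ha hx => by
    have h := M.smul_mem ha hx
    have : i + (j - n) = (i + j) - n := by ring
    simpa [this] using h
  fg := M.fg

/-- The grading shift as a (graded) functor. -/
def shiftF (A : GAlg k) (n : ℤ) : GMod A ⥤ GMod A where
  obj M := GMod.shift n M
  map f := ⟨f.1, fun i x h => f.2 (i - n) x h⟩

/-- Isomorphism in `H`-gmod, concretely. -/
structure GIso (M N : GMod A) where
  e : M.carrier ≃ₗ[A.carrier] N.carrier
  mem : ∀ (i : ℤ) (x : M.carrier), x ∈ M.grading i → e x ∈ N.grading i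
  mem' : ∀ (i : ℤ) (y : N.carrier), y ∈ N.grading i → e.symm y ∈ M.grading i

/-- A graded (homogeneous) submodule. -/
def GMod.IsGSub (M : GMod A) (W : Submodule A.carrier M.carrier) : Prop :=
  W.restrictScalars k = ⨆ i : ℤ, (W.restrictScalars k ⊓ M.grading i)

/-- The subquotient `W/W'` of a graded module. -/
abbrev sqMod (M : GMod A) (W W' : Submodule A.carrier M.carrier) : Type :=
  W ⧸ (W'.comap W.subtype)

/-- The induced grading on a subquotient. -/
abbrev sqGrading (M : GMod A) (W W' : Submodule A.carrier M.carrier) (i : ℤ) :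
    Submodule k (sqMod M W W') :=
  ((M.grading i).comap ((W.subtype).restrictScalars k)).map
    (((W'.comap W.subtype).mkQ).restrictScalars k)

/-- The subquotient `W/W'` is isomorphic, as a graded module, to `N`. -/
def SQIso (M : GMod A) (W W' : Submodule A.carrier M.carrier) (N : GMod A) : Prop :=
  ∃ e : (sqMod M W W') ≃ₗ[A.carrier] N.carrier,
    ∀ i : ℤ, (sqGrading M W W' i).map
      ((e : sqMod M W W' →ₗ[A.carrier] N.carrier).restrictScalars k) = N.grading i

/-- A separated filtration by graded submodules. -/
structure GFilt (M : GMod A) where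
  F : ℕ → Submodule A.carrier M.carrier
  first : F 0 = ⊤
  anti : ∀ n, F (n + 1) ≤ F n
  graded : ∀ n, M.IsGSub (F n)
  separated : ∀ x : M.carrier, (∀ n, x ∈ F n) → x = 0

/-- The filtration `Φ` has all subquotients zero or of the form `q^d N` with
`N` in the family `S`. -/
def FiltBy (M : GMod A) (Φ : GFilt M) (S : Set (GMod A)) : Prop :=
  ∀ n : ℕ, Subsingleton (sqMod M (Φ.F n) (Φ.F (n + 1))) ∨
    ∃ N ∈ S, ∃ d : ℤ, SQIso M (Φ.F n) (Φ.F (n + 1)) (GMod.shift d N)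

/-- Homogeneous (degree `d`) `H`-linear maps. -/
def ghomSet (M N : GMod A) (d : ℤ) : Set (M.carrier →ₗ[A.carrier] N.carrier) :=
  {f | ∀ (i : ℤ) (x : M.carrier), x ∈ M.grading i → f x ∈ N.grading (i + d)}

/-- Homogeneous degree `d` maps as a `k`-submodule of all `H`-linear maps. -/
def ghomSub (M N : GMod A) (d : ℤ) :
    Submodule k (M.carrier →ₗ[A.carrier] N.carrier) where
  carrier := ghomSet M N d
  add_mem' := fun hf hg i x hx => (N.grading (i + d)).add_mem (hf i x hx) (hg i x hx)
  zero_mem' := fun i x _ => (N.grading (i + d)).zero_mem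
  smul_mem' := fun c f hf i x hx => by
    simpa using (N.grading (i + d)).smul_mem c (hf i x hx)

/-- A graded-simple module. -/
def IsGSimple (M : GMod A) : Prop :=
  Nontrivial M.carrier ∧
    ∀ W : Submodule A.carrier M.carrier, M.IsGSub W → W = ⊥ ∨ W = ⊤

/-- Graded projectivity. -/
def GProjective (P : GMod A) : Prop :=
  ∀ (M N : GMod A) (g : M ⟶ N) (h : P ⟶ N),
    Function.Surjective g.1 → ∃ l : P ⟶ M, l ≫ g = h

/-- Vanishing of all (graded) `ext¹` groups `ext¹(U, V) = ⊕ₙ Ext¹(qⁿU, V) = 0`: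
every extension of a shift of `U` by `V` splits. -/
def Ext1Vanish (U V : GMod A) : Prop :=
  ∀ (n : ℤ) (E : GMod A) (f : V ⟶ E) (g : E ⟶ GMod.shift n U),
    Function.Injective f.1 → Function.Surjective g.1 →
    LinearMap.range f.1 = LinearMap.ker g.1 →
    ∃ s : GMod.shift n U ⟶ E, s ≫ g = 𝟙 (GMod.shift n U)

/-- The structure of an affine highest weight category on `H`-gmod, i.e. an
affine quasi-hereditary structure on `H` (Kleshchev).  The proper costandard
objects are axiomatised through their homological characterisation. -/
structure AHW (A : GAlg k) (Idx : Type) [Fintype Idx] [PartialOrder Idx] :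
    Type 1 where
  /-- simple objects -/
  L : Idx → GMod A
  /-- projective covers -/
  P : Idx → GMod A
  /-- standard objects -/
  Δ : Idx → GMod A
  /-- proper costandard objects -/
  pco : Idx → GMod A
  noeth : IsNoetherianRing A.carrier
  laur : A.Laurentian
  simple : ∀ π, IsGSimple (L π)
  simple_complete : ∀ S : GMod A, IsGSimple S →
    ∃ (π : Idx) (d : ℤ), Nonempty (GIso S (GMod.shift d (L π)))
  simple_irred : ∀ (π σ : Idx) (d : ℤ),
    Nonempty (GIso (L π) (GMod.shift d (L σ))) → π = σ
  proj : ∀ π, GProjective (P π)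
  cover : ∀ π, ∃ p : P π ⟶ L π, Function.Surjective p.1 ∧
    ∀ W : Submodule A.carrier (P π).carrier, (P π).IsGSub W →
      W ⊔ LinearMap.ker p.1 = ⊤ → W = ⊤
  /-- `Δ(π) = P(π)/(Σ images of graded maps from P(σ), σ ≰ π)` -/
  std_def : ∀ π, ∃ dm : P π ⟶ Δ π, Function.Surjective dm.1 ∧
    LinearMap.ker dm.1 =
      ⨆ (p : Σ σ : Idx, (P σ).carrier →ₗ[A.carrier] (P π).carrier)
        (_ : ¬ p.1 ≤ π) (_ : ∃ d, p.2 ∈ ghomSet (P p.1) (P π) d),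
          LinearMap.range p.2
  /-- the kernel of `P(π) ↠ Δ(π)` is filtered by shifts of `Δ(σ)`, `σ > π` -/
  ker_filt : ∀ π, ∃ Φ : GFilt (P π), (∃ N, Φ.F N = ⊥) ∧
    SQIso (P π) (Φ.F 0) (Φ.F 1) (Δ π) ∧
    ∀ n : ℕ, 1 ≤ n →
      (Subsingleton (sqMod (P π) (Φ.F n) (Φ.F (n + 1))) ∨
        ∃ σ : Idx, π < σ ∧ ∃ d : ℤ,
          SQIso (P π) (Φ.F n) (Φ.F (n + 1)) (GMod.shift d (Δ σ)))
  /-- `B_π = end(Δ(π))` is a graded polynomial ring on homogeneous generators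
  of positive degree -/
  end_poly : ∀ π, ∃ (nv : ℕ) (dg : Fin nv → ℤ),
    (∀ i, 0 < dg i) ∧
    ∃ e : MvPolynomial (Fin nv) k →ₐ[k] Module.End A.carrier (Δ π).carrier,
      Function.Bijective e ∧
      ∀ i, (e (MvPolynomial.X i) :
        (Δ π).carrier →ₗ[A.carrier] (Δ π).carrier) ∈ ghomSet (Δ π) (Δ π) (dg i)
  /-- `hom(P(π), Δ(σ))` is a graded free `B_σ`-module of finite rank -/
  hom_free : ∀ π σ, ∃ (mr : ℕ)
    (b : Fin mr → ((P π).carrier →ₗ[A.carrier] (Δ σ).carrier))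
    (db : Fin mr → ℤ),
    (∀ i, b i ∈ ghomSet (P π) (Δ σ) (db i)) ∧
    Function.Bijective (fun c : Fin mr → Module.End A.carrier (Δ σ).carrier =>
      ∑ i, LinearMap.comp (c i : (Δ σ).carrier →ₗ[A.carrier] (Δ σ).carrier) (b i))
  /-- the proper costandard objects have finite length … -/
  pco_finlen : ∀ π, IsFiniteLength A.carrier (pco π).carrier
  /-- … and satisfy `hom(Δ(σ), ∇̄(π)) = δ_{σπ} k` concentrated in degree 0 … -/
  pco_hom : ∀ π, ∃ f₀ : (Δ π).carrier →ₗ[A.carrier] (pco π).carrier,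
    f₀ ∈ ghomSet (Δ π) (pco π) 0 ∧ f₀ ≠ 0 ∧
    (∀ (d : ℤ) (f : (Δ π).carrier →ₗ[A.carrier] (pco π).carrier),
      f ∈ ghomSet (Δ π) (pco π) d → ∃ c : k, f = c • f₀) ∧
    ∀ (σ : Idx) (d : ℤ) (f : (Δ σ).carrier →ₗ[A.carrier] (pco π).carrier),
      f ∈ ghomSet (Δ σ) (pco π) d → σ ≠ π → f = 0
  /-- … and `ext¹(Δ(σ), ∇̄(π)) = 0` -/
  pco_ext : ∀ π σ, Ext1Vanish (Δ σ) (pco π)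

variable {Idx : Type} [Fintype Idx] [PartialOrder Idx]

/-- `V` has a `Δ`-filtration. -/
def HasDFilt (S : AHW A Idx) (M : GMod A) : Prop :=
  ∃ Φ : GFilt M, FiltBy M Φ (Set.range S.Δ)

/-- `V` has a `∇̄`-filtration. -/
def HasPCFilt (S : AHW A Idx) (M : GMod A) : Prop :=
  ∃ Φ : GFilt M, FiltBy M Φ (Set.range S.pco)

/-- Tilting modules. -/
def IsTilting (S : AHW A Idx) (M : GMod A) : Prop :=
  HasDFilt S M ∧ HasPCFilt S M

/-- The multiplicity `(V : Δ(π))` of `Δ(π)` in a given `Δ`-filtration. -/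
noncomputable def dMult (S : AHW A Idx) {M : GMod A} (Φ : GFilt M) (π : Idx) : ℕ :=
  Set.ncard {n : ℕ | ∃ d : ℤ,
    SQIso M (Φ.F n) (Φ.F (n + 1)) (GMod.shift d (S.Δ π))}

/-- `V` admits a (finite) `Δ`-filtration with `(V:Δ(π)) = 1` and `(V:Δ(σ)) = 0`
for `σ ≰ π`. -/
def MultCond (S : AHW A Idx) (M : GMod A) (π : Idx) : Prop :=
  ∃ Φ : GFilt M, FiltBy M Φ (Set.range S.Δ) ∧ (∃ N, Φ.F N = ⊥) ∧
    dMult S Φ π = 1 ∧ ∀ σ : Idx, ¬ σ ≤ π → dMult S Φ σ = 0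

/-- Indecomposability (no nontrivial graded idempotent endomorphism). -/
def Indec (M : GMod A) : Prop :=
  Nontrivial M.carrier ∧
    ∀ e : M ⟶ M, e ≫ e = e → e.1 = 0 ∨ e.1 = LinearMap.id

/-- A short exact sequence in `H`-gmod. -/
def SES {X Y Z : GMod A} (f : X ⟶ Y) (g : Y ⟶ Z) : Prop :=
  Function.Injective f.1 ∧ Function.Surjective g.1 ∧
    LinearMap.range f.1 = LinearMap.ker g.1

/-! ### Ext-vanishing for ungraded modules -/

section Ungraded

variable {R : Type} [Ring R]

/-- `Extⁿ_R(M, N) = 0`, for ungraded modules. -/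
def ExtZero (R : Type) [Ring R] (n : ℕ) (M N : Type) [AddCommGroup M] [Module R M] [AddCommGroup N]
    [Module R N] : Prop :=
  Subsingleton (Abelian.Ext (ModuleCat.of R M) (ModuleCat.of R N) n)

variable {M₁ M₂ M₃ Y : Type} [AddCommGroup M₁] [AddCommGroup M₂] [AddCommGroup M₃]
  [AddCommGroup Y] [Module R M₁] [Module R M₂] [Module R M₃] [Module R Y]

/-- `0 → M₁ → M₂ → M₃ → 0` is a short exact sequence of ungraded modules. -/
structure ShortEx (f : M₁ →ₗ[R] M₂) (g : M₂ →ₗ[R] M₃) : Prop where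
  inj : Function.Injective f
  surj : Function.Surjective g
  ex : LinearMap.range f = LinearMap.ker g

namespace ShortEx

variable {f : M₁ →ₗ[R] M₂} {g : M₂ →ₗ[R] M₃}

lemma comp_zero (h : ShortEx f g) : g.comp f = 0 := by
  ext x
  have : f x ∈ LinearMap.ker g := h.ex ▸ LinearMap.mem_range_self f x
  simpa using this

lemma short (h : ShortEx f g) : (ShortComplex.mk (ModuleCat.ofHom f) (ModuleCat.ofHom g)
    (by rw [← ModuleCat.ofHom_comp, h.comp_zero]; rfl)).ShortExact :=
  ShortComplex.ShortExact.mk' (by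
    rw [ShortComplex.ShortExact.moduleCat_exact_iff_function_exact]
    exact LinearMap.exact_iff.mpr h.ex.symm)
    ((ModuleCat.mono_iff_injective _).mpr h.inj) ((ModuleCat.epi_iff_surjective _).mpr h.surj)

lemma contra_mid (h : ShortEx f g) {n : ℕ} (h1 : ExtZero R n M₁ Y) (h3 : ExtZero R n M₃ Y) : ExtZero R n M₂ Y := by
  refine subsingleton_of_forall_eq 0 fun x => ?_
  obtain ⟨y, hy⟩ := Abelian.Ext.contravariant_sequence_exact₂ h.short _ x (h1.elim _ _)
  rw [← hy, h3.elim y 0]; simp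

lemma contra_left (h : ShortEx f g) {n : ℕ} (h2 : ExtZero R n M₂ Y) (h3 : ExtZero R (1 + n) M₃ Y) :
    ExtZero R n M₁ Y := by
  refine subsingleton_of_forall_eq 0 fun x => ?_
  obtain ⟨y, hy⟩ := Abelian.Ext.contravariant_sequence_exact₁ h.short _ x rfl (h3.elim _ _)
  rw [← hy, h2.elim y 0]; simp

lemma contra_right (h : ShortEx f g) {n : ℕ} (h1 : ExtZero R n M₁ Y) (h2 : ExtZero R (1 + n) M₂ Y) :
    ExtZero R (1 + n) M₃ Y := by
  refine subsingleton_of_forall_eq 0 fun x => ?_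
  obtain ⟨y, hy⟩ := Abelian.Ext.contravariant_sequence_exact₃ h.short _ x (h2.elim _ _) rfl
  rw [← hy, h1.elim y 0]; simp

lemma cov_mid (h : ShortEx f g) {n : ℕ} (h1 : ExtZero R n Y M₁) (h3 : ExtZero R n Y M₃) : ExtZero R n Y M₂ := by
  refine subsingleton_of_forall_eq 0 fun x => ?_
  obtain ⟨y, hy⟩ := Abelian.Ext.covariant_sequence_exact₂ _ h.short x (h3.elim _ _)
  rw [← hy, h1.elim y 0]; simp

lemma cov_right (h : ShortEx f g) {n : ℕ} (h2 : ExtZero R n Y M₂) (h1 : ExtZero R (n + 1) Y M₁) :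
    ExtZero R n Y M₃ := by
  refine subsingleton_of_forall_eq 0 fun x => ?_
  obtain ⟨y, hy⟩ := Abelian.Ext.covariant_sequence_exact₃ _ h.short x rfl (h1.elim _ _)
  rw [← hy, h2.elim y 0]; simp

/-- If `Ext¹(M₃, Y) = 0`, maps into `Y` extend along `M₁ → M₂`. -/
lemma extend (h : ShortEx f g) (h3 : ExtZero R 1 M₃ Y) (u : M₁ →ₗ[R] Y) :
    ∃ v : M₂ →ₗ[R] Y, v.comp f = u := by
  obtain ⟨y, hy⟩ := Abelian.Ext.contravariant_sequence_exact₁ h.short _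
    (Abelian.Ext.mk₀ (ModuleCat.ofHom u)) (n₁ := 1) rfl (h3.elim _ _)
  refine ⟨(Abelian.Ext.homEquiv₀ y).hom, ?_⟩
  rw [← Abelian.Ext.mk₀_homEquiv₀_apply y, Abelian.Ext.mk₀_comp_mk₀] at hy
  have := (Abelian.Ext.mk₀_bijective _ _).1 hy
  exact congrArg ModuleCat.Hom.hom this

/-- If `Ext¹(Y, M₁) = 0`, maps from `Y` lift along `M₂ → M₃`. -/
lemma lift (h : ShortEx f g) (h1 : ExtZero R 1 Y M₁) (u : Y →ₗ[R] M₃) :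
    ∃ v : Y →ₗ[R] M₂, g.comp v = u := by
  obtain ⟨y, hy⟩ := Abelian.Ext.covariant_sequence_exact₃ _ h.short
    (Abelian.Ext.mk₀ (ModuleCat.ofHom u)) (n₁ := 1) rfl (h1.elim _ _)
  refine ⟨(Abelian.Ext.homEquiv₀ y).hom, ?_⟩
  rw [← Abelian.Ext.mk₀_homEquiv₀_apply y, Abelian.Ext.mk₀_comp_mk₀] at hy
  have := (Abelian.Ext.mk₀_bijective _ _).1 hy
  exact congrArg ModuleCat.Hom.hom this

/-- A converse to `ShortEx.extend`: if all maps `M₁ → Y` extend to `M₂` and `Ext¹(M₂, Y) = 0`, then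
`Ext¹(M₃, Y) = 0`. -/
lemma of_extend (h : ShortEx f g) (h2 : ExtZero R 1 M₂ Y)
    (H : ∀ u : M₁ →ₗ[R] Y, ∃ v : M₂ →ₗ[R] Y, v.comp f = u) : ExtZero R 1 M₃ Y := by
  refine subsingleton_of_forall_eq 0 fun x => ?_
  obtain ⟨y, hy⟩ := Abelian.Ext.contravariant_sequence_exact₃ h.short _ x (h2.elim _ _)
    (n₀ := 0) rfl
  obtain ⟨v, hv⟩ := H (Abelian.Ext.homEquiv₀ y).hom
  have e : y = (Abelian.Ext.mk₀ (ModuleCat.ofHom f)).comp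
      (Abelian.Ext.mk₀ (ModuleCat.ofHom v)) (zero_add 0) := by
    rw [Abelian.Ext.mk₀_comp_mk₀, ← Abelian.Ext.mk₀_homEquiv₀_apply y]
    exact congrArg Abelian.Ext.mk₀ (ModuleCat.hom_ext hv.symm)
  rw [← hy, e]
  exact h.short.extClass_comp_assoc _

/-- A converse to `ShortEx.lift`. -/
lemma of_lift (h : ShortEx f g) (h2 : ExtZero R 1 Y M₂)
    (H : ∀ u : Y →ₗ[R] M₃, ∃ v : Y →ₗ[R] M₂, g.comp v = u) : ExtZero R 1 Y M₁ := by
  refine subsingleton_of_forall_eq 0 fun x => ?_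
  obtain ⟨y, hy⟩ := Abelian.Ext.covariant_sequence_exact₁ _ h.short x (h2.elim _ _)
    (n₀ := 0) rfl
  obtain ⟨v, hv⟩ := H (Abelian.Ext.homEquiv₀ y).hom
  have e : y = (Abelian.Ext.mk₀ (ModuleCat.ofHom v)).comp
      (Abelian.Ext.mk₀ (ModuleCat.ofHom g)) (zero_add 0) := by
    rw [Abelian.Ext.mk₀_comp_mk₀, ← Abelian.Ext.mk₀_homEquiv₀_apply y]
    exact congrArg Abelian.Ext.mk₀ (ModuleCat.hom_ext hv.symm)
  rw [← hy, e]
  rw [Abelian.Ext.comp_assoc_of_second_deg_zero, h.short.comp_extClass, Abelian.Ext.comp_zero]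

lemma of_ker (g : M₂ →ₗ[R] M₃) (hg : Function.Surjective g) :
    ShortEx (LinearMap.ker g).subtype g :=
  ⟨Subtype.val_injective, hg, by simp⟩

lemma of_mkQ (W : Submodule R M₂) : ShortEx W.subtype W.mkQ :=
  ⟨Subtype.val_injective, W.mkQ_surjective, by simp⟩

lemma of_inj (f : M₁ →ₗ[R] M₂) (hf : Function.Injective f) : ShortEx f (LinearMap.range f).mkQ :=
  ⟨hf, Submodule.mkQ_surjective _, by simp⟩

lemma of_equiv (e : M₁ ≃ₗ[R] M₂) : ShortEx (e : M₁ →ₗ[R] M₂) (0 : M₂ →ₗ[R] PUnit) :=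
  ⟨e.injective, fun x => ⟨0, rfl⟩, by simp⟩

end ShortEx

lemma ExtZero.of_projective [Module.Projective R M₁] (n : ℕ) : ExtZero R (n + 1) M₁ Y :=
  haveI : Projective (ModuleCat.of R M₁) := (ModuleCat.of R M₁).projective_of_categoryTheory_projective
  Abelian.Ext.subsingleton_of_projective _ _ n

end Ungraded

/-! ### Homogeneous components -/

section GradedBasics

namespace GMod

lemma bij (M : GMod A) : Function.Bijective (DirectSum.coeLinearMap M.grading) := M.internal

/-- The projection of a graded module onto its degree `i` component. -/
noncomputable def comp (M : GMod A) (i : ℤ) : M.carrier →ₗ[k] M.carrier :=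
  (M.grading i).subtype ∘ₗ DirectSum.component k ℤ (fun i => M.grading i) i ∘ₗ
    (LinearEquiv.ofBijective (DirectSum.coeLinearMap M.grading) M.bij).symm.toLinearMap

variable (M N : GMod A)

lemma comp_mem (i : ℤ) (x : M.carrier) : M.comp i x ∈ M.grading i := by
  simp [comp]

lemma symm_of_mem {i : ℤ} {x : M.carrier} (hx : x ∈ M.grading i) :
    (LinearEquiv.ofBijective (DirectSum.coeLinearMap M.grading) M.bij).symm x
      = DirectSum.lof k ℤ (fun i => M.grading i) i ⟨x, hx⟩ := by
  rw [LinearEquiv.symm_apply_eq]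
  simp [DirectSum.coeLinearMap_lof]

variable {M N}

lemma comp_same {i : ℤ} {x : M.carrier} (hx : x ∈ M.grading i) : M.comp i x = x := by
  simp [comp, symm_of_mem M hx, DirectSum.component.lof_self]

lemma comp_ne {i j : ℤ} {x : M.carrier} (hx : x ∈ M.grading j) (h : j ≠ i) :
    M.comp i x = 0 := by
  simp [comp, symm_of_mem M hx, DirectSum.component.of, h]

lemma mem_of_eq {i j : ℤ} {x : M.carrier} (hx : x ∈ M.grading i) (h : i = j) :
    x ∈ M.grading j := h ▸ hx

lemma iSup_grading (M : GMod A) : ⨆ i, M.grading i = ⊤ := M.internal.submodule_iSup_eq_top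

/-- It suffices to check additive properties on homogeneous elements. -/
lemma hom_induction {p : M.carrier → Prop} (h0 : p 0) (hadd : ∀ x y, p x → p y → p (x + y))
    (hh : ∀ i x, x ∈ M.grading i → p x) (x : M.carrier) : p x := by
  have hx : x ∈ ⨆ i, M.grading i := by rw [iSup_grading]; trivial
  exact Submodule.iSup_induction _ (motive := p) hx hh h0 hadd

lemma exists_sum (x : M.carrier) :
    ∃ s : Finset ℤ, (∀ i ∉ s, M.comp i x = 0) ∧ ∑ i ∈ s, M.comp i x = x := by
  classical
  induction x using hom_induction with
  | h0 => exact ⟨∅, by simp⟩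
  | hadd x y hx hy =>
    obtain ⟨s, hs, hs'⟩ := hx
    obtain ⟨t, ht, ht'⟩ := hy
    have e1 : ∑ i ∈ s ∪ t, M.comp i x = x := by
      rw [← Finset.sum_subset Finset.subset_union_left (fun i _ hi => hs i hi), hs']
    have e2 : ∑ i ∈ s ∪ t, M.comp i y = y := by
      rw [← Finset.sum_subset Finset.subset_union_right (fun i _ hi => ht i hi), ht']
    refine ⟨s ∪ t, fun i hi => ?_, ?_⟩
    · simp only [Finset.mem_union, not_or] at hi
      simp [hs i hi.1, ht i hi.2]
    · simp only [map_add, Finset.sum_add_distrib, e1, e2]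
  | hh i x hx =>
    refine ⟨{i}, fun j hj => comp_ne hx fun h => hj (by simp [h]), by simp [comp_same hx]⟩

lemma eq_zero_of_comp {x : M.carrier} (h : ∀ i, M.comp i x = 0) : x = 0 := by
  obtain ⟨s, -, hs⟩ := exists_sum x
  rw [← hs]; exact Finset.sum_eq_zero fun i _ => h i

end GMod

lemma GAlg.iSup_grading (A : GAlg k) : ⨆ i, A.grading i = ⊤ := A.internal.submodule_iSup_eq_top

lemma GAlg.hom_induction {p : A.carrier → Prop} (h0 : p 0)
    (hadd : ∀ x y, p x → p y → p (x + y))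
    (hh : ∀ i x, x ∈ A.grading i → p x) (x : A.carrier) : p x := by
  have hx : x ∈ ⨆ i, A.grading i := by rw [A.iSup_grading]; trivial
  exact Submodule.iSup_induction _ (motive := p) hx hh h0 hadd

namespace GMod

variable {M N Q : GMod A}

lemma comp_smul {i j : ℤ} {a : A.carrier} (ha : a ∈ A.grading j) (x : M.carrier) :
    M.comp (i + j) (a • x) = a • M.comp i x := by
  induction x using hom_induction with
  | h0 => simp
  | hadd x y hx hy => simp [smul_add, hx, hy]
  | hh l x hx =>
    by_cases h : l = i
    · subst h
      rw [comp_same hx, comp_same (mem_of_eq (M.smul_mem ha hx) (add_comm _ _))]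
    · rw [comp_ne hx h, comp_ne (M.smul_mem ha hx) (by omega), smul_zero]

lemma isGSub_iff {W : Submodule A.carrier M.carrier} :
    M.IsGSub W ↔ ∀ x ∈ W, ∀ i, M.comp i x ∈ W := by
  constructor
  · intro h x hx i
    have hx' : x ∈ ⨆ i : ℤ, (W.restrictScalars k ⊓ M.grading i) := h ▸ hx
    refine Submodule.iSup_induction _ (motive := fun x => M.comp i x ∈ W) hx' ?_ (by simp) ?_
    · rintro j y ⟨hy, hy'⟩
      by_cases hij : j = i
      · subst hij; rw [comp_same hy']; exact hy
      · rw [comp_ne hy' hij]; exact W.zero_mem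
    · intro y z hy hz; rw [map_add]; exact W.add_mem hy hz
  · intro h
    refine le_antisymm (fun x hx => ?_) (iSup_le fun i => inf_le_left)
    obtain ⟨s, -, hs⟩ := exists_sum x
    rw [← hs]
    exact Submodule.sum_mem _ fun i _ =>
      Submodule.mem_iSup_of_mem i ⟨h x hx i, M.comp_mem i x⟩

/-- A criterion for a family of subspaces to be a grading. -/
lemma internal_of {V : Type} [AddCommGroup V] [Module k V] (G : ℤ → Submodule k V)
    (h1 : ∀ x, x ∈ ⨆ i, G i) (h2 : ∀ i x, x ∈ G i → x ∈ ⨆ j, ⨆ _ : j ≠ i, G j → x = 0) :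
    DirectSum.IsInternal G := by
  rw [DirectSum.isInternal_submodule_iff_iSupIndep_and_iSup_eq_top]
  refine ⟨fun i => ?_, eq_top_iff.mpr fun x _ => h1 x⟩
  rw [Submodule.disjoint_def]
  exact fun x hx hx' => h2 i x hx hx'

lemma comp_eq_zero_of_mem_iSup {i : ℤ} {x : M.carrier}
    (hx : x ∈ ⨆ j, ⨆ _ : j ≠ i, M.grading j) : M.comp i x = 0 := by
  have : ⨆ j, ⨆ _ : j ≠ i, M.grading j ≤ LinearMap.ker (M.comp i) :=
    iSup₂_le fun j hj x hx => comp_ne hx hj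
  exact this hx

variable [IsNoetherianRing A.carrier]

instance (M : GMod A) : IsNoetherian A.carrier M.carrier :=
  haveI := M.fg
  isNoetherian_of_isNoetherianRing_of_finite _ _

/-- A graded submodule as a graded module. -/
def sub (M : GMod A) (W : Submodule A.carrier M.carrier) (hW : M.IsGSub W) : GMod A where
  carrier := W
  grading i := (M.grading i).comap ((W.subtype).restrictScalars k)
  internal := by
    refine internal_of _ (fun x => ?_) fun i x hx hx' => ?_
    · obtain ⟨s, -, hs⟩ := exists_sum (x : M.carrier)
      have : x = ∑ i ∈ s, (⟨M.comp i x, isGSub_iff.mp hW x x.2 i⟩ : W) := by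
        apply Subtype.ext; simp [hs]
      rw [this]
      exact Submodule.sum_mem _ fun i _ => Submodule.mem_iSup_of_mem i (M.comp_mem i x)
    · have h : (x : M.carrier) ∈ ⨆ j, ⨆ _ : j ≠ i, M.grading j := by
        have := Submodule.mem_map_of_mem (f := (W.subtype).restrictScalars k) hx'
        simp only [Submodule.map_iSup] at this
        exact (iSup₂_mono fun j hj => Submodule.map_comap_le _ _ :
          _ ≤ ⨆ j, ⨆ _ : j ≠ i, M.grading j) this
      apply Subtype.ext
      have h' := comp_eq_zero_of_mem_iSup h
      rwa [comp_same (x := (x : M.carrier)) hx] at h'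
  smul_mem ha hx := M.smul_mem ha hx
  fg := inferInstance

/-- The quotient of a graded module by a graded submodule. -/
def quo (M : GMod A) (W : Submodule A.carrier M.carrier) (hW : M.IsGSub W) : GMod A where
  carrier := M.carrier ⧸ W
  grading i := (M.grading i).map ((W.mkQ).restrictScalars k)
  internal := by
    refine internal_of _ (fun x => ?_) fun i x hx hx' => ?_
    · rw [← Submodule.map_iSup, iSup_grading]
      obtain ⟨y, rfl⟩ := W.mkQ_surjective x
      exact ⟨y, trivial, rfl⟩
    · simp only [← Submodule.map_iSup] at hx'
      obtain ⟨y, hy, rfl⟩ := hx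
      obtain ⟨z, hz, hyz⟩ := hx'
      have h0 : z - y ∈ W := by
        have : W.mkQ (z - y) = 0 := by rw [map_sub, sub_eq_zero]; exact hyz
        exact (Submodule.Quotient.mk_eq_zero W).mp this
      have := isGSub_iff.mp hW _ h0 i
      rw [map_sub, comp_eq_zero_of_mem_iSup hz, comp_same hy, zero_sub, neg_mem_iff] at this
      simpa using this
  smul_mem := by
    rintro i j a _ ha ⟨y, hy, rfl⟩
    exact ⟨a • y, M.smul_mem ha hy, by simp⟩
  fg := by
    have := M.fg
    infer_instance

/-- The direct sum of two graded modules. -/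
def prod (M N : GMod A) : GMod A where
  carrier := M.carrier × N.carrier
  grading i := (M.grading i).prod (N.grading i)
  internal := by
    refine internal_of _ (fun x => ?_) fun i x hx hx' => ?_
    · obtain ⟨x, y⟩ := x
      have h1 : ((x, 0) : M.carrier × N.carrier) ∈
          ⨆ i, (M.grading i).prod (N.grading i) := by
        induction x using hom_induction with
        | h0 => exact Submodule.zero_mem _
        | hadd x y hx hy => simpa using Submodule.add_mem _ hx hy
        | hh i x hx => exact Submodule.mem_iSup_of_mem i ⟨hx, Submodule.zero_mem _⟩
      have h2 : ((0, y) : M.carrier × N.carrier) ∈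
          ⨆ i, (M.grading i).prod (N.grading i) := by
        induction y using hom_induction with
        | h0 => exact Submodule.zero_mem _
        | hadd x y hx hy => simpa using Submodule.add_mem _ hx hy
        | hh i x hx => exact Submodule.mem_iSup_of_mem i ⟨Submodule.zero_mem _, hx⟩
      simpa using Submodule.add_mem _ h1 h2
    · have : ⨆ j, ⨆ _ : j ≠ i, (M.grading j).prod (N.grading j) ≤
          (LinearMap.ker (M.comp i)).prod (LinearMap.ker (N.comp i)) :=
        iSup₂_le fun j hj x hx => ⟨comp_ne hx.1 hj, comp_ne hx.2 hj⟩
      have h := this hx'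
      have h1 : M.comp i x.1 = 0 := h.1
      have h2 : N.comp i x.2 = 0 := h.2
      rw [comp_same hx.1] at h1
      rw [comp_same hx.2] at h2
      exact Prod.ext h1 h2
  smul_mem ha hx := ⟨M.smul_mem ha hx.1, N.smul_mem ha hx.2⟩
  fg := by
    have := M.fg
    have := N.fg
    infer_instance

end GMod

/-- The regular graded module. -/
def GMod.reg (A : GAlg k) : GMod A where
  carrier := A.carrier
  grading := A.grading
  internal := A.internal
  smul_mem ha hx := A.mul_mem ha hx
  fg := inferInstance

/-- The graded free module with basis elements in degrees `d 0, …, d (n - 1)`. -/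
def GMod.free (A : GAlg k) {n : ℕ} (d : Fin n → ℤ) : GMod A where
  carrier := Fin n → A.carrier
  grading i :=
    { carrier := {x | ∀ j, x j ∈ A.grading (i - d j)}
      add_mem' := fun hx hy j => Submodule.add_mem _ (hx j) (hy j)
      zero_mem' := fun j => Submodule.zero_mem _
      smul_mem' := fun c x hx j => Submodule.smul_mem _ c (hx j) }
  internal := by
    refine GMod.internal_of _ (fun x => ?_) fun i x hx hx' => ?_
    · rw [← Finset.univ_sum_single x]
      refine Submodule.sum_mem _ fun j _ => ?_
      generalize x j = a
      induction a using GAlg.hom_induction with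
      | h0 => simp
      | hadd x y hx hy => rw [Pi.single_add]; exact Submodule.add_mem _ hx hy
      | hh l a ha =>
        refine Submodule.mem_iSup_of_mem (l + d j) fun j' => ?_
        by_cases h : j' = j
        · subst h; simpa using ha
        · simp [h]
    · funext j
      have hle : (⨆ l, ⨆ _ : l ≠ i, ({ carrier := {x | ∀ j, x j ∈ A.grading (l - d j)}
                                       add_mem' := fun hx hy j => Submodule.add_mem _ (hx j) (hy j)
                                       zero_mem' := fun j => Submodule.zero_mem _
                                       smul_mem' := fun c x hx j => Submodule.smul_mem _ c (hx j) } :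
          Submodule k (Fin n → A.carrier))) ≤
          (LinearMap.ker ((GMod.reg A).comp (i - d j))).comap (LinearMap.proj j) :=
        iSup₂_le fun l hl x hx => GMod.comp_ne (M := GMod.reg A) (hx j) (by omega)
      have h : (GMod.reg A).comp (i - d j) (x j) = 0 := hle hx'
      rwa [GMod.comp_same (M := GMod.reg A) (hx j)] at h
  smul_mem ha hx j := by
    rw [add_sub_assoc]; exact A.mul_mem ha (hx j)
  fg := inferInstanceAs (Module.Finite A.carrier (Fin n → A.carrier))

end GradedBasics

section GradedMaps

variable {M N Q : GMod A}

open GMod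

/-- Linear maps agreeing on homogeneous elements are equal. -/
lemma ghom_ext {Y : Type} [AddCommGroup Y] [Module A.carrier Y]
    {f g : M.carrier →ₗ[A.carrier] Y} (h : ∀ i, ∀ x ∈ M.grading i, f x = g x) : f = g := by
  ext x
  induction x using hom_induction with
  | h0 => simp
  | hadd x y hx hy => simp [hx, hy]
  | hh i x hx => exact h i x hx

/-- The `k`-linear map underlying the homogeneous component of degree `d` of `f`. -/
noncomputable def hcompAux (f : M.carrier →ₗ[A.carrier] N.carrier) (d : ℤ) :
    M.carrier →ₗ[k] N.carrier :=
  DirectSum.toModule k ℤ N.carrier (fun i => N.comp (i + d) ∘ₗ f.restrictScalars k ∘ₗ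
    (M.grading i).subtype) ∘ₗ
    (LinearEquiv.ofBijective (DirectSum.coeLinearMap M.grading) M.bij).symm.toLinearMap

lemma hcompAux_apply (f : M.carrier →ₗ[A.carrier] N.carrier) (d : ℤ) {i : ℤ} {x : M.carrier}
    (hx : x ∈ M.grading i) : hcompAux f d x = N.comp (i + d) (f x) := by
  simp [hcompAux, symm_of_mem M hx]

/-- The homogeneous component of degree `d` of a linear map between graded modules. -/
noncomputable def hcomp (f : M.carrier →ₗ[A.carrier] N.carrier) (d : ℤ) :
    M.carrier →ₗ[A.carrier] N.carrier where
  toFun := hcompAux f d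
  map_add' := map_add _
  map_smul' a x := by
    induction a using GAlg.hom_induction with
    | h0 => simp
    | hadd a b ha hb => rw [add_smul, map_add, ha, hb]; simp [add_smul]
    | hh j a ha =>
      induction x using hom_induction with
      | h0 => simp
      | hadd x y hx hy => rw [smul_add, map_add, hx, hy]; simp
      | hh i x hx =>
        rw [hcompAux_apply f d hx, hcompAux_apply f d (M.smul_mem ha hx), map_smul,
          RingHom.id_apply, ← comp_smul ha]
        congr 2; ring

lemma hcomp_apply (f : M.carrier →ₗ[A.carrier] N.carrier) (d : ℤ) {i : ℤ} {x : M.carrier}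
    (hx : x ∈ M.grading i) : hcomp f d x = N.comp (i + d) (f x) := hcompAux_apply f d hx

lemma hcomp_mem (f : M.carrier →ₗ[A.carrier] N.carrier) (d : ℤ) : hcomp f d ∈ ghomSet M N d := by
  intro i x hx; rw [hcomp_apply f d hx]; exact comp_mem _ _ _

lemma comp_ghom {g : M.carrier →ₗ[A.carrier] N.carrier} {d : ℤ} (hg : g ∈ ghomSet M N d) (i : ℤ)
    (x : M.carrier) : N.comp (i + d) (g x) = g (M.comp i x) := by
  induction x using hom_induction with
  | h0 => simp
  | hadd x y hx hy => simp [hx, hy]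
  | hh l x hx =>
    by_cases h : l = i
    · subst h; rw [comp_same hx, comp_same (hg _ _ hx)]
    · rw [comp_ne hx h, comp_ne (hg _ _ hx) (by omega), map_zero]

lemma hcomp_of_mem {f : M.carrier →ₗ[A.carrier] N.carrier} {d : ℤ} (hf : f ∈ ghomSet M N d) :
    hcomp f d = f := by
  refine ghom_ext fun i x hx => ?_
  rw [hcomp_apply f d hx, comp_same (hf _ _ hx)]

lemma hcomp_comp_left {g : N.carrier →ₗ[A.carrier] Q.carrier} {e : ℤ} (hg : g ∈ ghomSet N Q e)
    (f : M.carrier →ₗ[A.carrier] N.carrier) (d : ℤ) :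
    hcomp (M := M) (N := Q) (g.comp f) (d + e) = g.comp (hcomp f d) := by
  refine ghom_ext fun i x hx => ?_
  rw [hcomp_apply _ _ hx, LinearMap.comp_apply, LinearMap.comp_apply, hcomp_apply _ _ hx,
    ← comp_ghom hg, add_assoc]

lemma hcomp_comp_right {f : M.carrier →ₗ[A.carrier] N.carrier} {e : ℤ} (hf : f ∈ ghomSet M N e)
    (g : N.carrier →ₗ[A.carrier] Q.carrier) (d : ℤ) :
    hcomp (M := M) (N := Q) (g.comp f) (e + d) = (hcomp g d).comp f := by
  refine ghom_ext fun i x hx => ?_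
  rw [hcomp_apply _ _ hx, LinearMap.comp_apply, LinearMap.comp_apply, hcomp_apply _ _ (hf _ _ hx),
    add_assoc]

lemma hcomp_sub (f g : M.carrier →ₗ[A.carrier] N.carrier) (d : ℤ) :
    hcomp (f - g) d = hcomp f d - hcomp g d := by
  refine ghom_ext fun i x hx => ?_
  simp [hcomp_apply _ _ hx]

lemma exists_hcomp_ne {f : M.carrier →ₗ[A.carrier] N.carrier} (hf : f ≠ 0) :
    ∃ d, hcomp f d ≠ 0 := by
  by_contra! h
  refine hf (ghom_ext fun i x hx => ?_)
  refine eq_zero_of_comp fun j => ?_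
  have := hcomp_apply f (j - i) hx
  rw [h, add_sub_cancel] at this
  simpa using this.symm

/-- A linear map out of a finitely generated graded module is the sum of finitely many of
its homogeneous components. -/
lemma exists_hcomp_sum (f : M.carrier →ₗ[A.carrier] N.carrier) :
    ∃ T : Finset ℤ, ∑ d ∈ T, hcomp f d = f := by
  classical
  have key : ∀ x : M.carrier, ∃ T : Finset ℤ, ∀ T', T ⊆ T' → ∑ d ∈ T', hcomp f d x = f x := by
    intro x
    induction x using hom_induction with
    | h0 => exact ⟨∅, by simp⟩
    | hadd x y hx hy =>
      obtain ⟨s, hs⟩ := hx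
      obtain ⟨t, ht⟩ := hy
      refine ⟨s ∪ t, fun T' hT => ?_⟩
      simp only [map_add, Finset.sum_add_distrib]
      rw [hs T' (Finset.union_subset_left hT), ht T' (Finset.union_subset_right hT)]
    | hh i x hx =>
      obtain ⟨s, hs, hs'⟩ := exists_sum (f x)
      refine ⟨s.image (fun j => j - i), fun T' hT => ?_⟩
      rw [← Finset.sum_subset hT, Finset.sum_image (by intro a _ b _ h; simpa using h)]
      · refine (Finset.sum_congr rfl fun j _ => ?_).trans hs'
        rw [hcomp_apply _ _ hx, add_sub_cancel]
      · intro d _ hd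
        rw [hcomp_apply _ _ hx]
        refine hs _ fun h => hd ?_
        exact Finset.mem_image.mpr ⟨i + d, h, by ring⟩
  choose T hT using key
  obtain ⟨s, hs⟩ := M.fg.fg_top
  refine ⟨s.biUnion T, ?_⟩
  refine LinearMap.ext_on_range (v := ((↑) : s → M.carrier)) (by simpa using hs) fun x => ?_
  rw [LinearMap.sum_apply]
  exact hT x _ (Finset.subset_biUnion_of_mem T x.2)

/-! ### Graded submodules, kernels and images -/

lemma isGSub_bot : M.IsGSub ⊥ := isGSub_iff.mpr (by simp)

lemma isGSub_top : M.IsGSub ⊤ := isGSub_iff.mpr (by simp)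

lemma isGSub_comap {f : M.carrier →ₗ[A.carrier] N.carrier} {d : ℤ} (hf : f ∈ ghomSet M N d)
    {W : Submodule A.carrier N.carrier} (hW : N.IsGSub W) : M.IsGSub (W.comap f) :=
  isGSub_iff.mpr fun x hx i => by
    rw [Submodule.mem_comap, ← comp_ghom hf]
    exact isGSub_iff.mp hW _ hx _

lemma isGSub_map {f : M.carrier →ₗ[A.carrier] N.carrier} {d : ℤ} (hf : f ∈ ghomSet M N d)
    {W : Submodule A.carrier M.carrier} (hW : M.IsGSub W) : N.IsGSub (W.map f) :=
  isGSub_iff.mpr fun x hx i => by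
    obtain ⟨y, hy, rfl⟩ := hx
    obtain ⟨j, rfl⟩ : ∃ j, i = j + d := ⟨i - d, by ring⟩
    rw [comp_ghom hf]
    exact Submodule.mem_map_of_mem (isGSub_iff.mp hW _ hy _)

lemma isGSub_ker {f : M.carrier →ₗ[A.carrier] N.carrier} {d : ℤ} (hf : f ∈ ghomSet M N d) :
    M.IsGSub (LinearMap.ker f) := isGSub_comap hf isGSub_bot

lemma isGSub_range {f : M.carrier →ₗ[A.carrier] N.carrier} {d : ℤ} (hf : f ∈ ghomSet M N d) :
    N.IsGSub (LinearMap.range f) := by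
  rw [LinearMap.range_eq_map]; exact isGSub_map hf isGSub_top

lemma isGSub_sup {W W' : Submodule A.carrier M.carrier} (hW : M.IsGSub W) (hW' : M.IsGSub W') :
    M.IsGSub (W ⊔ W') := isGSub_iff.mpr fun x hx i => by
  obtain ⟨y, hy, z, hz, rfl⟩ := Submodule.mem_sup.mp hx
  rw [map_add]
  exact Submodule.add_mem_sup (isGSub_iff.mp hW _ hy i) (isGSub_iff.mp hW' _ hz i)

lemma isGSub_span {s : Set M.carrier} (hs : ∀ x ∈ s, ∃ i, x ∈ M.grading i) :
    M.IsGSub (Submodule.span A.carrier s) := isGSub_iff.mpr fun x hx => by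
  induction hx using Submodule.span_induction with
  | zero => simp
  | add x y _ _ hx hy => intro i; rw [map_add]; exact Submodule.add_mem _ (hx i) (hy i)
  | mem x hx =>
    obtain ⟨j, hj⟩ := hs x hx
    intro i
    by_cases h : j = i
    · subst h; rw [comp_same hj]; exact Submodule.subset_span hx
    · rw [comp_ne hj h]; exact Submodule.zero_mem _
  | smul a x _ hx =>
    induction a using GAlg.hom_induction with
    | h0 => simp
    | hadd a b ha hb => intro i; rw [add_smul, map_add]; exact Submodule.add_mem _ (ha i) (hb i)
    | hh j a ha =>
      intro i
      obtain ⟨l, rfl⟩ : ∃ l, i = l + j := ⟨i - j, by ring⟩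
      rw [comp_smul ha]
      exact Submodule.smul_mem _ _ (hx l)

lemma ghom_comp {f : M.carrier →ₗ[A.carrier] N.carrier} {g : N.carrier →ₗ[A.carrier] Q.carrier}
    {d e : ℤ} (hf : f ∈ ghomSet M N d) (hg : g ∈ ghomSet N Q e) :
    g.comp f ∈ ghomSet M Q (d + e) := fun i x hx =>
  mem_of_eq (hg _ _ (hf _ _ hx)) (by ring)

/-- A homogeneous preimage of a homogeneous element. -/
lemma exists_ghom_preimage {g : M.carrier →ₗ[A.carrier] N.carrier} {d : ℤ}
    (hg : g ∈ ghomSet M N d) (hs : Function.Surjective g) {i : ℤ} {y : N.carrier}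
    (hy : y ∈ N.grading (i + d)) : ∃ x ∈ M.grading i, g x = y := by
  obtain ⟨x, rfl⟩ := hs y
  exact ⟨M.comp i x, comp_mem _ _ _, by rw [← comp_ghom hg, comp_same hy]⟩

lemma ghom_of_comp_surj {g : M.carrier →ₗ[A.carrier] N.carrier} {d e : ℤ}
    (hg : g ∈ ghomSet M N d) (hs : Function.Surjective g)
    {h : N.carrier →ₗ[A.carrier] Q.carrier} (hh : h.comp g ∈ ghomSet M Q e) :
    h ∈ ghomSet N Q (e - d) := by
  intro i y hy
  obtain ⟨x, hx, rfl⟩ := exists_ghom_preimage (i := i - d) hg hs (by simpa using hy)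
  exact mem_of_eq (hh _ _ hx) (by ring)

lemma ghom_of_comp_inj {g : N.carrier →ₗ[A.carrier] Q.carrier} {d e : ℤ}
    (hg : g ∈ ghomSet N Q d) (hs : Function.Injective g)
    {h : M.carrier →ₗ[A.carrier] N.carrier} (hh : g.comp h ∈ ghomSet M Q e) :
    h ∈ ghomSet M N (e - d) := by
  intro i x hx
  have h1 : N.comp (i + (e - d)) (h x) = h x := by
    apply hs
    rw [← comp_ghom hg]
    exact comp_same (mem_of_eq (hh _ _ hx) (by ring))
  rw [← h1]; exact comp_mem _ _ _

/-- Factoring a map through a surjection. -/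
lemma exists_descend {X Y Z : Type} [AddCommGroup X] [AddCommGroup Y] [AddCommGroup Z]
    [Module A.carrier X] [Module A.carrier Y] [Module A.carrier Z]
    {g : X →ₗ[A.carrier] Y} (hs : Function.Surjective g) {f : X →ₗ[A.carrier] Z}
    (h : LinearMap.ker g ≤ LinearMap.ker f) : ∃ u : Y →ₗ[A.carrier] Z, u.comp g = f := by
  refine ⟨((LinearMap.ker g).liftQ f h).comp (g.quotKerEquivOfSurjective hs).symm.toLinearMap, ?_⟩
  ext x
  have : (g.quotKerEquivOfSurjective hs).symm (g x) = (LinearMap.ker g).mkQ x := by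
    rw [LinearEquiv.symm_apply_eq]; rfl
  simp [this]

/-- Factoring a map through an injection. -/
lemma exists_factor {X Y Z : Type} [AddCommGroup X] [AddCommGroup Y] [AddCommGroup Z]
    [Module A.carrier X] [Module A.carrier Y] [Module A.carrier Z]
    {g : Y →ₗ[A.carrier] Z} (hi : Function.Injective g) {f : X →ₗ[A.carrier] Z}
    (h : LinearMap.range f ≤ LinearMap.range g) : ∃ u : X →ₗ[A.carrier] Y, g.comp u = f := by
  refine ⟨(LinearEquiv.ofInjective g hi).symm.toLinearMap.comp
    (f.codRestrict (LinearMap.range g) fun x => h ⟨x, rfl⟩), ?_⟩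
  ext x
  have := LinearEquiv.apply_symm_apply (LinearEquiv.ofInjective g hi)
    (f.codRestrict (LinearMap.range g) (fun x => h ⟨x, rfl⟩) x)
  exact congrArg Subtype.val this

namespace GMod

/-- The projection onto the quotient by a graded submodule. -/
def quoπ (M : GMod A) (W : Submodule A.carrier M.carrier) (hW : M.IsGSub W) :
    M.carrier →ₗ[A.carrier] (M.quo W hW).carrier := W.mkQ

variable {W : Submodule A.carrier M.carrier} (hW : M.IsGSub W)

lemma quoπ_surj : Function.Surjective (M.quoπ W hW) := W.mkQ_surjective

lemma ker_quoπ : LinearMap.ker (M.quoπ W hW) = W := W.ker_mkQ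

lemma quoπ_mem : M.quoπ W hW ∈ ghomSet M (M.quo W hW) 0 := fun i x hx => by
  rw [add_zero]; exact ⟨x, hx, rfl⟩

variable [IsNoetherianRing A.carrier]

/-- The inclusion of a graded submodule. -/
def subι (M : GMod A) (W : Submodule A.carrier M.carrier) (hW : M.IsGSub W) :
    (M.sub W hW).carrier →ₗ[A.carrier] M.carrier := W.subtype

lemma subι_inj : Function.Injective (M.subι W hW) := Subtype.val_injective

lemma range_subι : LinearMap.range (M.subι W hW) = W := W.range_subtype

lemma subι_mem : M.subι W hW ∈ ghomSet (M.sub W hW) M 0 := fun i x hx => by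
  rw [add_zero]; exact hx

lemma shortEx : ShortEx (M.subι W hW) (M.quoπ W hW) := ShortEx.of_mkQ W

end GMod

/-! ### Generators and degree bounds -/

lemma exists_gens (M : GMod A) : ∃ (n : ℕ) (d : Fin n → ℤ)
    (π : (Fin n → A.carrier) →ₗ[A.carrier] M.carrier),
    Function.Surjective π ∧ ∀ j, π (Pi.single j 1) ∈ M.grading (d j) := by
  classical
  let T : Set M.carrier := {x | ∃ i, x ∈ M.grading i}
  have hT : Submodule.span A.carrier T = ⊤ := by
    refine eq_top_iff.mpr fun x _ => ?_
    obtain ⟨s, -, hs⟩ := exists_sum x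
    rw [← hs]
    exact Submodule.sum_mem _ fun i _ => Submodule.subset_span ⟨i, comp_mem _ _ _⟩
  have hfg : (Submodule.span A.carrier T).FG := hT ▸ M.fg.fg_top
  obtain ⟨s, hsT, hs⟩ := Submodule.fg_span_iff_fg_span_finset_subset T |>.mp hfg
  choose d hd using fun j : Fin s.card => hsT (s.equivFin.symm j).2
  refine ⟨s.card, d, Fintype.linearCombination A.carrier fun j => (s.equivFin.symm j : M.carrier),
    ?_, fun j => ?_⟩
  · rw [← LinearMap.range_eq_top, Fintype.range_linearCombination]
    rw [← hT, hs]
    congr 1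
    ext x
    constructor
    · rintro ⟨j, rfl⟩; exact (s.equivFin.symm j).2
    · intro hx; exact ⟨s.equivFin ⟨x, hx⟩, by simp⟩
  · simpa using hd j

lemma free_basis_mem {n : ℕ} (d : Fin n → ℤ) (j : Fin n) :
    (Pi.single j (1 : A.carrier) : Fin n → A.carrier) ∈ (GMod.free A d).grading (d j) := by
  intro j'
  by_cases h : j' = j
  · subst h; simpa using A.one_mem
  · simp [h]

/-- Linear maps out of a graded free module are determined by the images of the basis. -/
lemma free_ghom {n : ℕ} {d : Fin n → ℤ} {e : ℤ} {π : (Fin n → A.carrier) →ₗ[A.carrier] M.carrier}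
    (h : ∀ j, π (Pi.single j 1) ∈ M.grading (d j + e)) : π ∈ ghomSet (GMod.free A d) M e := by
  intro i x hx
  have key : ∀ y : Fin n → A.carrier, π y = ∑ j, y j • π (Pi.single j 1) := by
    intro y
    conv_lhs => rw [← Finset.univ_sum_single y, map_sum]
    refine Finset.sum_congr rfl fun j _ => ?_
    rw [← map_smul, ← Pi.single_smul, smul_eq_mul, mul_one]
  refine (key x).symm ▸ Submodule.sum_mem _ fun j _ => ?_
  exact mem_of_eq (M.smul_mem (hx j) (h j)) (by ring)

/-- Every object is a quotient of a graded free module. -/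
lemma exists_free (M : GMod A) : ∃ (n : ℕ) (d : Fin n → ℤ)
    (π : (GMod.free A d).carrier →ₗ[A.carrier] M.carrier),
    Function.Surjective π ∧ π ∈ ghomSet (GMod.free A d) M 0 := by
  obtain ⟨n, d, π, hs, h⟩ := exists_gens M
  exact ⟨n, d, π, hs, free_ghom (e := 0) (by simpa using h)⟩

end GradedMaps

section Bounds

namespace GMod

lemma exists_genbound (M : GMod A) : ∃ c : ℤ, ∀ {Y : Type} [AddCommGroup Y] [Module A.carrier Y]
    (f : M.carrier →ₗ[A.carrier] Y), (∀ i ≤ c, ∀ x ∈ M.grading i, f x = 0) → f = 0 := by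
  obtain ⟨n, d, π, hs, h⟩ := exists_gens M
  obtain ⟨c, hc⟩ := (Set.finite_range d).bddAbove
  refine ⟨c, fun f hf => ?_⟩
  have : f.comp π = 0 := LinearMap.pi_ext' fun j => LinearMap.ext_ring <| by
    simpa using hf (d j) (hc ⟨j, rfl⟩) _ (h j)
  ext x
  obtain ⟨y, rfl⟩ := hs x
  exact LinearMap.congr_fun this y

instance finite_hom (M : GMod A) (Y : GMod A) [Module.Finite k Y.carrier] :
    Module.Finite k (M.carrier →ₗ[A.carrier] Y.carrier) := by
  obtain ⟨n, d, π, hs, h⟩ := exists_gens M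
  let F : (M.carrier →ₗ[A.carrier] Y.carrier) →ₗ[k] (Fin n → Y.carrier) :=
    { toFun := fun f j => f (π (Pi.single j 1))
      map_add' := fun f g => rfl
      map_smul' := fun c f => rfl }
  refine Module.Finite.of_injective F fun f g hfg => ?_
  have : f.comp π = g.comp π := LinearMap.pi_ext' fun j => LinearMap.ext_ring <| by
    simpa using (show f (π (Pi.single j 1)) = g (π (Pi.single j 1)) from congrFun hfg j)
  ext x
  obtain ⟨y, rfl⟩ := hs x
  exact LinearMap.congr_fun this y

lemma exists_low (hL : A.Laurentian) (M : GMod A) : ∃ b : ℤ, ∀ i < b, ∀ x ∈ M.grading i, x = 0 := by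
  obtain ⟨N, hN⟩ := hL.1
  obtain ⟨n, d, π, hs, h⟩ := exists_free M
  obtain ⟨c, hc⟩ := (Set.finite_range d).bddBelow
  refine ⟨c + N, fun i hi x hx => ?_⟩
  obtain ⟨y, hy, rfl⟩ := exists_ghom_preimage (i := i) h hs (by simpa using hx)
  have : y = 0 := by
    funext j
    have h1 : y j ∈ A.grading (i - d j) := hy j
    have h2 : c ≤ d j := hc ⟨j, rfl⟩
    rw [hN _ (by omega)] at h1
    exact (Submodule.mem_bot k).mp h1
  rw [this, map_zero]

lemma finite_grading (hL : A.Laurentian) (M : GMod A) (i : ℤ) : Module.Finite k (M.grading i) := by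
  obtain ⟨n, d, π, hs, h⟩ := exists_free M
  have := hL.2
  let φ : ((j : Fin n) → A.grading (i - d j)) →ₗ[k] M.carrier :=
    { toFun := fun a => π fun j => (a j : A.carrier)
      map_add' := fun a b => map_add π _ _
      map_smul' := fun c a => LinearMap.map_smul_of_tower π c _ }
  have hle : M.grading i ≤ LinearMap.range φ := fun x hx => by
    obtain ⟨y, hy, rfl⟩ := exists_ghom_preimage (i := i) h hs (by simpa using hx)
    exact ⟨fun j => ⟨y j, hy j⟩, rfl⟩
  exact Submodule.finiteDimensional_of_le hle

/-- The submodule generated by all components of degree at least `D`. -/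
def tail (M : GMod A) (D : ℤ) : Submodule A.carrier M.carrier :=
  Submodule.span A.carrier {x | ∃ i, D ≤ i ∧ x ∈ M.grading i}

lemma mem_tail {M : GMod A} {D i : ℤ} (h : D ≤ i) {x : M.carrier} (hx : x ∈ M.grading i) :
    x ∈ M.tail D := Submodule.subset_span ⟨i, h, hx⟩

lemma isGSub_tail (M : GMod A) (D : ℤ) : M.IsGSub (M.tail D) :=
  isGSub_span fun _ hx => ⟨hx.choose, hx.choose_spec.2⟩

lemma tail_anti (M : GMod A) : Antitone M.tail := fun _ _ h =>
  Submodule.span_mono fun _ ⟨i, hi, hx⟩ => ⟨i, h.trans hi, hx⟩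

lemma comp_tail {N : ℤ} (hN : ∀ n < N, A.grading n = ⊥) {M : GMod A} {D : ℤ} {x : M.carrier}
    (hx : x ∈ M.tail D) : ∀ i < D + N, M.comp i x = 0 := by
  induction hx using Submodule.span_induction with
  | zero => simp
  | add x y _ _ hx hy => intro i hi; rw [map_add, hx i hi, hy i hi, add_zero]
  | mem x hx =>
    obtain ⟨j, hj, hx⟩ := hx
    intro i hi
    by_cases h : N ≤ 0
    · exact comp_ne hx (by omega)
    · have : (1 : A.carrier) = 0 := by
        have := A.one_mem
        rwa [hN 0 (by omega), Submodule.mem_bot] at this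
      rw [← one_smul A.carrier (M.comp i x), this, zero_smul]
  | smul a x hx' hx =>
    clear hx
    induction hx' using Submodule.span_induction generalizing a with
    | zero => simp
    | add x y _ _ hx hy =>
      intro i hi; rw [smul_add, map_add, hx a i hi, hy a i hi, add_zero]
    | smul b x _ hx => intro i hi; rw [← mul_smul]; exact hx _ i hi
    | mem x hx =>
      obtain ⟨j, hj, hx⟩ := hx
      intro i hi
      induction a using GAlg.hom_induction with
      | h0 => simp
      | hadd a b ha hb => rw [add_smul, map_add, ha, hb, add_zero]
      | hh l a ha =>
        by_cases h : l < N
        · rw [hN l h, Submodule.mem_bot] at ha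
          simp [ha]
        · exact comp_ne (M.smul_mem ha hx) (by omega)

lemma finite_quot (hL : A.Laurentian) (M : GMod A) {W : Submodule A.carrier M.carrier} {D : ℤ}
    (hW : ∀ i, D ≤ i → ∀ x ∈ M.grading i, x ∈ W) : Module.Finite k (M.carrier ⧸ W) := by
  obtain ⟨b, hb⟩ := exists_low hL M
  have := M.finite_grading hL
  let U : Submodule k M.carrier := ⨆ i ∈ Finset.Ico b D, M.grading i
  have : Module.Finite k U := Module.Finite.iff_fg.mpr
    (Submodule.fg_biSup _ _ fun i _ => Module.Finite.iff_fg.mp (this i))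
  refine Module.Finite.of_surjective ((W.mkQ.restrictScalars k).comp U.subtype) fun x => ?_
  obtain ⟨x, rfl⟩ := W.mkQ_surjective x
  induction x using hom_induction with
  | h0 => exact ⟨0, by simp⟩
  | hadd x y hx hy =>
    obtain ⟨u, hu⟩ := hx
    obtain ⟨v, hv⟩ := hy
    exact ⟨u + v, by rw [map_add, hu, hv, map_add]⟩
  | hh i x hx =>
    by_cases h : i < b
    · exact ⟨0, by rw [hb i h x hx, map_zero, map_zero]⟩
    by_cases h' : D ≤ i
    · refine ⟨0, ?_⟩
      rw [map_zero, eq_comm]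
      exact (Submodule.Quotient.mk_eq_zero W).mpr (hW i h' x hx)
    · exact ⟨⟨x, Submodule.mem_iSup_of_mem i (Submodule.mem_iSup_of_mem
        (Finset.mem_Ico.mpr ⟨by omega, by omega⟩) hx)⟩, rfl⟩

lemma finite_of_tail (hL : A.Laurentian) (M : GMod A) {D : ℤ} (h : M.tail D = ⊥) :
    Module.Finite k M.carrier := by
  have : Module.Finite k (M.carrier ⧸ (⊥ : Submodule A.carrier M.carrier)) :=
    finite_quot hL M fun i hi x hx => h ▸ mem_tail hi hx
  exact Module.Finite.equiv
    ((Submodule.quotEquivOfEqBot (⊥ : Submodule A.carrier M.carrier) rfl).restrictScalars k)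

lemma eq_zero_of_forall_tail (hL : A.Laurentian) {M : GMod A} {x : M.carrier}
    (h : ∀ D : ℕ, x ∈ M.tail D) : x = 0 := by
  obtain ⟨N, hN⟩ := hL.1
  refine eq_zero_of_comp fun i => comp_tail hN (h (i + 1 - N).toNat) _ ?_
  have := Int.self_le_toNat (i + 1 - N)
  omega

lemma exists_tail_bot (hL : A.Laurentian) (M : GMod A) [IsArtinian A.carrier M.carrier] :
    ∃ D : ℤ, M.tail D = ⊥ := by
  obtain ⟨D, hD⟩ := IsArtinian.monotone_stabilizes
    (⟨fun n : ℕ => OrderDual.toDual (M.tail n), fun a b h =>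
      M.tail_anti (by exact_mod_cast h)⟩ : ℕ →o (Submodule A.carrier M.carrier)ᵒᵈ)
  refine ⟨D, (Submodule.eq_bot_iff _).mpr fun x hx => eq_zero_of_forall_tail hL fun n => ?_⟩
  rcases le_total D n with h | h
  · exact (show M.tail D = M.tail n from hD n h) ▸ hx
  · exact M.tail_anti (by exact_mod_cast h) hx

lemma finite_of_artinian (hL : A.Laurentian) (M : GMod A) [IsArtinian A.carrier M.carrier] :
    Module.Finite k M.carrier :=
  (exists_tail_bot hL M).elim fun _ h => finite_of_tail hL M h

lemma finite_of_simple (hL : A.Laurentian) {M : GMod A} (hM : IsGSimple M) :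
    Module.Finite k M.carrier := by
  by_cases h : ∃ D, M.tail D = ⊥
  · exact h.elim fun _ h => finite_of_tail hL M h
  · obtain ⟨x, hx⟩ := @exists_ne _ hM.1 (0 : M.carrier)
    refine absurd (eq_zero_of_forall_tail hL fun D => ?_) hx
    rw [(hM.2 _ (M.isGSub_tail D)).resolve_left fun h' => h ⟨_, h'⟩]
    trivial

lemma exists_high (hL : A.Laurentian) (M : GMod A) [Module.Finite k M.carrier] :
    ∃ D : ℤ, ∀ i, D ≤ i → ∀ x ∈ M.grading i, x = 0 := by
  have : IsArtinian A.carrier M.carrier := isArtinian_of_tower k inferInstance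
  obtain ⟨D, hD⟩ := exists_tail_bot hL M
  exact ⟨D, fun i hi x hx => (Submodule.mem_bot A.carrier).mp (hD ▸ mem_tail hi hx)⟩

end GMod
end Bounds

/-! ### Graded and ungraded `Ext¹` -/

section Bridge

variable {M N Q : GMod A}

open GMod

lemma exists_ghom_lift {g : N.carrier →ₗ[A.carrier] Q.carrier} {d e : ℤ} (hg : g ∈ ghomSet N Q d)
    {h : M.carrier →ₗ[A.carrier] Q.carrier} (hh : h ∈ ghomSet M Q e)
    (H : ∃ l : M.carrier →ₗ[A.carrier] N.carrier, g.comp l = h) :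
    ∃ l ∈ ghomSet M N (e - d), g.comp l = h := by
  obtain ⟨l, rfl⟩ := H
  refine ⟨hcomp l (e - d), hcomp_mem _ _, ?_⟩
  rw [← hcomp_comp_left hg, sub_add_cancel, hcomp_of_mem hh]

lemma exists_ghom_ext {g : M.carrier →ₗ[A.carrier] N.carrier} {d e : ℤ} (hg : g ∈ ghomSet M N d)
    {h : M.carrier →ₗ[A.carrier] Q.carrier} (hh : h ∈ ghomSet M Q e)
    (H : ∃ l : N.carrier →ₗ[A.carrier] Q.carrier, l.comp g = h) :
    ∃ l ∈ ghomSet N Q (e - d), l.comp g = h := by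
  obtain ⟨l, rfl⟩ := H
  refine ⟨hcomp l (e - d), hcomp_mem _ _, ?_⟩
  rw [← hcomp_comp_right hg, add_sub_cancel, hcomp_of_mem hh]

lemma ghom_of_hom (f : M ⟶ N) : f.1 ∈ ghomSet M N 0 := fun i x hx => by
  rw [add_zero]; exact f.2 i x hx

/-- A degree zero map as a morphism. -/
def homOfGhom {f : M.carrier →ₗ[A.carrier] N.carrier} (hf : f ∈ ghomSet M N 0) : M ⟶ N :=
  ⟨f, fun i x hx => by simpa using hf i x hx⟩

instance free_projective {n : ℕ} (d : Fin n → ℤ) :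
    Module.Projective A.carrier (GMod.free A d).carrier :=
  inferInstanceAs (Module.Projective A.carrier (Fin n → A.carrier))

lemma GProjective.projective (h : GProjective M) : Module.Projective A.carrier M.carrier := by
  obtain ⟨n, d, π, hs, hπ⟩ := exists_free M
  obtain ⟨l, hl⟩ := h _ _ (homOfGhom hπ) (𝟙 M) hs
  exact Module.Projective.of_split l.1 π (congrArg Subtype.val hl)

lemma mem_shift {i j n : ℤ} {x : M.carrier} (hx : x ∈ M.grading i) (h : i = j - n) :
    x ∈ (M.shift n).grading j := by
  subst h; exact hx

/-- Vanishing of ungraded `Ext¹` implies vanishing of graded `ext¹`. -/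
lemma vanish_of_extZero {U V : GMod A} (h : ExtZero A.carrier 1 U.carrier V.carrier) :
    Ext1Vanish U V := by
  intro n E f g hf hg hfg
  have hex : ShortEx f.1 g.1 := ⟨hf, hg, hfg⟩
  have hid : (LinearMap.id : (U.shift n).carrier →ₗ[A.carrier] _) ∈
      ghomSet (U.shift n) (U.shift n) 0 := ghom_of_hom (𝟙 _)
  obtain ⟨s, hs, hs'⟩ := exists_ghom_lift (ghom_of_hom g) hid (hex.lift h _)
  exact ⟨homOfGhom (by simpa using hs), Subtype.ext hs'⟩

variable [IsNoetherianRing A.carrier]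

/-- `Ext¹(M, Y)` vanishes as soon as homogeneous maps into `Y` extend along the inclusion of
the first syzygy of `M`. -/
lemma extZero_of_homog {Y : GMod A}
    (H : ∀ (K F : GMod A) (ι : K.carrier →ₗ[A.carrier] F.carrier)
      (π : F.carrier →ₗ[A.carrier] M.carrier), ι ∈ ghomSet K F 0 → π ∈ ghomSet F M 0 →
      ShortEx ι π → Module.Projective A.carrier F.carrier →
      ∀ e, ∀ u ∈ ghomSet K Y e, ∃ v : F.carrier →ₗ[A.carrier] Y.carrier, v.comp ι = u) :
    ExtZero A.carrier 1 M.carrier Y.carrier := by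
  obtain ⟨n, d, π, hs, hπ⟩ := exists_free M
  have hK := isGSub_ker hπ
  have hex : ShortEx ((GMod.free A d).subι _ hK) π := ShortEx.of_ker π hs
  refine hex.of_extend (ExtZero.of_projective 0) fun u => ?_
  obtain ⟨T, hT⟩ := exists_hcomp_sum (M := (GMod.free A d).sub _ hK) (N := Y) u
  choose v hv using fun e => H _ _ _ π (subι_mem hK) hπ hex inferInstance e
    (hcomp (M := (GMod.free A d).sub _ hK) (N := Y) u e) (hcomp_mem _ _)
  refine ⟨∑ e ∈ T, v e, ?_⟩
  rw [← hT]
  ext x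
  simp only [LinearMap.comp_apply, LinearMap.sum_apply]
  exact Finset.sum_congr rfl fun e _ => LinearMap.congr_fun (hv e) x

/-- If `Ext¹(M, Y/Y')` vanishes for graded submodules `Y'` of `Y` living in arbitrarily high
degrees, then `Ext¹(M, Y) = 0`. -/
lemma extZero_of_approx {Y : GMod A}
    (H : ∀ D : ℤ, ∃ (Y' : Submodule A.carrier Y.carrier) (hY' : Y.IsGSub Y'),
      (∀ x ∈ Y', ∀ i < D, Y.comp i x = 0) ∧
        ExtZero A.carrier 1 M.carrier (Y.quo Y' hY').carrier) :
    ExtZero A.carrier 1 M.carrier Y.carrier := by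
  refine extZero_of_homog fun K F ι π hι hπ hex hF e u hu => ?_
  obtain ⟨c, hc⟩ := exists_genbound K
  obtain ⟨Y', hY', hD, hE⟩ := H (c + e + 1)
  obtain ⟨w, hw⟩ := hex.extend hE ((Y.quoπ Y' hY').comp u)
  obtain ⟨w', hw'⟩ := Module.projective_lifting_property (Y.quoπ Y' hY') w (quoπ_surj hY')
  refine ⟨hcomp w' e, ?_⟩
  have h1 : (Y.quoπ Y' hY').comp ((hcomp w' e).comp ι) = (Y.quoπ Y' hY').comp u := by
    have h2 : hcomp (N := Y.quo Y' hY') w e = (Y.quoπ Y' hY').comp (hcomp w' e) := by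
      rw [← hw', ← hcomp_comp_left (quoπ_mem hY'), add_zero]
    have h3 : (hcomp (N := Y.quo Y' hY') w e).comp ι = (Y.quoπ Y' hY').comp u := by
      rw [← hcomp_comp_right hι, zero_add, hw]
      have h4 := ghom_comp hu (quoπ_mem hY')
      rw [add_zero] at h4
      exact hcomp_of_mem h4
    rw [← h3, h2, LinearMap.comp_assoc]
  have hm : (hcomp w' e).comp ι ∈ ghomSet K Y e := by
    have h4 := ghom_comp hι (hcomp_mem w' e)
    rwa [zero_add] at h4
  rw [← sub_eq_zero]
  refine hc _ fun i hi x hx => ?_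
  have hx1 : ((hcomp w' e).comp ι - u) x ∈ Y' := by
    rw [← ker_quoπ hY', LinearMap.mem_ker, LinearMap.sub_apply, map_sub, sub_eq_zero]
    exact LinearMap.congr_fun h1 x
  have hx2 : ((hcomp w' e).comp ι - u) x ∈ Y.grading (i + e) :=
    Submodule.sub_mem _ (hm i x hx) (hu i x hx)
  rw [← comp_same hx2]
  exact hD _ hx1 _ (by omega)

/-- Vanishing of graded `ext¹` implies vanishing of ungraded `Ext¹`. -/
lemma extZero_of_vanish {U V : GMod A} (h : Ext1Vanish U V) :
    ExtZero A.carrier 1 U.carrier V.carrier := by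
  refine extZero_of_homog fun K F ι π hι hπ hex hF e u hu => ?_
  let B : GMod A := V.prod (F.shift e)
  let γ : K.carrier →ₗ[A.carrier] B.carrier := LinearMap.prod (-u) ι
  have hγ : γ ∈ ghomSet K B e := fun i x hx =>
    ⟨Submodule.neg_mem _ (hu i x hx), mem_shift (hι i x hx) (by ring)⟩
  have hW : B.IsGSub (LinearMap.range γ) := isGSub_range hγ
  let f : V.carrier →ₗ[A.carrier] (B.quo _ hW).carrier :=
    (B.quoπ _ hW).comp (LinearMap.inl A.carrier V.carrier F.carrier)
  let j : F.carrier →ₗ[A.carrier] (B.quo _ hW).carrier :=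
    (B.quoπ _ hW).comp (LinearMap.inr A.carrier V.carrier F.carrier)
  have hf : f ∈ ghomSet V (B.quo _ hW) 0 := fun i x hx =>
    quoπ_mem hW i _ ⟨hx, Submodule.zero_mem _⟩
  obtain ⟨g, hg⟩ : ∃ g : (B.quo _ hW).carrier →ₗ[A.carrier] U.carrier,
      g.comp (B.quoπ _ hW) = π.comp (LinearMap.snd A.carrier V.carrier F.carrier) := by
    refine exists_descend (quoπ_surj hW) ?_
    rw [ker_quoπ]
    rintro _ ⟨x, rfl⟩
    exact LinearMap.congr_fun hex.comp_zero x
  have hg' : g ∈ ghomSet (B.quo _ hW) (U.shift e) 0 := by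
    have : g.comp (B.quoπ _ hW) ∈ ghomSet B (U.shift e) 0 := by
      rw [hg]
      intro i x hx
      exact mem_shift (hπ _ _ hx.2) (by ring)
    exact ghom_of_comp_surj (d := 0) (quoπ_mem hW) (quoπ_surj hW) this
  have hgq : ∀ x, g (B.quoπ _ hW x) = π x.2 := fun x => LinearMap.congr_fun hg x
  have hfi : Function.Injective f := by
    rw [← LinearMap.ker_eq_bot, Submodule.eq_bot_iff]
    intro v hv
    have : ((v, 0) : V.carrier × F.carrier) ∈ LinearMap.ker (B.quoπ _ hW) := hv
    rw [ker_quoπ] at this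
    obtain ⟨x, hx⟩ := this
    have h2 : ι x = 0 := congrArg Prod.snd hx
    have h1 : -u x = v := congrArg Prod.fst hx
    rw [hex.inj (h2.trans (map_zero ι).symm), map_zero, neg_zero] at h1
    exact h1.symm
  have hgs : Function.Surjective g := fun y => by
    obtain ⟨x, rfl⟩ := hex.surj y
    exact ⟨B.quoπ _ hW (0, x), hgq _⟩
  -- the defining relation of the pushout
  have hrel : ∀ x, j (ι x) = f (u x) := fun x => by
    rw [← sub_eq_zero]
    have : ((0, ι x) - (u x, 0) : V.carrier × F.carrier) ∈ LinearMap.ker (B.quoπ _ hW) := by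
      rw [ker_quoπ]; exact ⟨x, Prod.ext (zero_sub _).symm (sub_zero _).symm⟩
    exact (map_sub (B.quoπ _ hW) _ _).symm.trans this
  have hfg : LinearMap.range f = LinearMap.ker g := by
    ext y
    constructor
    · rintro ⟨v, rfl⟩
      exact (hgq _).trans (map_zero π)
    · intro hy
      obtain ⟨⟨v, x⟩, rfl⟩ := quoπ_surj hW y
      have hx : x ∈ LinearMap.ker π := (hgq _).symm.trans hy
      rw [← hex.ex] at hx
      obtain ⟨z, rfl⟩ := hx
      refine ⟨v + u z, ?_⟩
      rw [map_add, ← hrel]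
      refine (map_add (B.quoπ _ hW) _ _).symm.trans (congrArg _ ?_)
      exact Prod.ext (add_zero v) (zero_add (ι z))
  obtain ⟨s, hs⟩ := h e _ (homOfGhom hf) (homOfGhom hg') hfi hgs hfg
  have hs' : ∀ y, g (s.1 y) = y := fun y => LinearMap.congr_fun (congrArg Subtype.val hs) y
  obtain ⟨r, hr⟩ : ∃ r : (B.quo _ hW).carrier →ₗ[A.carrier] V.carrier,
      f.comp r = LinearMap.id - (show U.carrier →ₗ[A.carrier] _ from s.1).comp g := by
    refine exists_factor hfi ?_
    rw [hfg]
    rintro _ ⟨y, rfl⟩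
    rw [LinearMap.mem_ker, LinearMap.sub_apply, map_sub]
    exact sub_eq_zero.mpr (hs' _).symm
  refine ⟨r.comp j, LinearMap.ext fun x => hfi ?_⟩
  have h1 := LinearMap.congr_fun hr (j (ι x))
  have h2 : g (j (ι x)) = 0 := (hgq _).trans (LinearMap.congr_fun hex.comp_zero x)
  rw [LinearMap.sub_apply, LinearMap.comp_apply, LinearMap.comp_apply, h2, map_zero, sub_zero] at h1
  exact h1.trans (hrel x)

end Bridge

section ExtTransport

variable {R : Type} [Ring R] {M N Y : Type} [AddCommGroup M] [AddCommGroup N] [AddCommGroup Y]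
  [Module R M] [Module R N] [Module R Y]

lemma ExtZero.of_subsingleton_left [Subsingleton M] (n : ℕ) : ExtZero R n M Y := by
  refine subsingleton_of_forall_eq 0 fun x => ?_
  have : 𝟙 (ModuleCat.of R M) = 0 := by ext x; exact Subsingleton.elim _ _
  rw [← Abelian.Ext.mk₀_id_comp x, this]; simp

lemma ExtZero.of_subsingleton_right [Subsingleton Y] (n : ℕ) : ExtZero R n M Y := by
  refine subsingleton_of_forall_eq 0 fun x => ?_
  have : 𝟙 (ModuleCat.of R Y) = 0 := by ext x; exact Subsingleton.elim _ _
  rw [← Abelian.Ext.comp_mk₀_id x, this]; simp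

lemma ExtZero.congr_left {n : ℕ} (h : ExtZero R n M Y) (e : M ≃ₗ[R] N) : ExtZero R n N Y :=
  (ShortEx.of_equiv e).contra_mid h (ExtZero.of_subsingleton_left n)

lemma ExtZero.congr_right {n : ℕ} (h : ExtZero R n Y M) (e : M ≃ₗ[R] N) : ExtZero R n Y N :=
  (ShortEx.of_equiv e).cov_mid h (ExtZero.of_subsingleton_right n)

/-- The exact sequence `0 → W/W' → M/W' → M/W → 0`. -/
lemma ShortEx.of_le {W W' : Submodule R M} (h : W' ≤ W) :
    ShortEx ((W'.comap W.subtype).mapQ W' W.subtype le_rfl)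
      (W'.mapQ W LinearMap.id (h : W' ≤ W.comap LinearMap.id)) := by
  refine ⟨?_, fun x => ?_, le_antisymm ?_ ?_⟩
  · rw [← LinearMap.ker_eq_bot, Submodule.ker_mapQ, Submodule.mkQ_map_self]
  · obtain ⟨x, rfl⟩ := W.mkQ_surjective x
    exact ⟨W'.mkQ x, rfl⟩
  · rintro _ ⟨x, rfl⟩
    obtain ⟨x, rfl⟩ := Submodule.mkQ_surjective _ x
    simp
  · intro x hx
    obtain ⟨x, rfl⟩ := Submodule.mkQ_surjective _ x
    have : x ∈ W := by simpa using hx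
    exact ⟨Submodule.mkQ _ ⟨x, this⟩, rfl⟩

end ExtTransport

section Filtrations

variable {M N Q : GMod A} {W W' : Submodule A.carrier M.carrier}

open GMod

lemma subsingleton_sq : Subsingleton (sqMod M W W') ↔ W ≤ W' := by
  rw [Submodule.Quotient.subsingleton_iff, Submodule.comap_subtype_eq_top]

lemma SQIso.exists_map [IsNoetherianRing A.carrier] {d : ℤ} (hW : M.IsGSub W)
    (h : SQIso M W W' (N.shift d)) :
    ∃ g : (M.sub W hW).carrier →ₗ[A.carrier] N.carrier, g ∈ ghomSet (M.sub W hW) N (-d) ∧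
      Function.Surjective g ∧ LinearMap.ker g = W'.comap (M.subι W hW) := by
  obtain ⟨e, he⟩ := h
  let e' : sqMod M W W' →ₗ[A.carrier] (N.shift d).carrier := e
  let g : (M.sub W hW).carrier →ₗ[A.carrier] N.carrier := e'.comp (W'.comap W.subtype).mkQ
  have hg : Function.Surjective (e'.comp (W'.comap W.subtype).mkQ) :=
    e.surjective.comp (Submodule.mkQ_surjective _)
  refine ⟨g, fun i x hx => ?_, hg, ?_⟩
  · have : g x ∈ (N.shift d).grading i := he i ▸ ⟨_, ⟨x, hx, rfl⟩, rfl⟩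
    exact this
  · ext x
    exact (LinearEquiv.map_eq_zero_iff e).trans (Submodule.Quotient.mk_eq_zero _)

lemma SQIso.of_map [IsNoetherianRing A.carrier] {d : ℤ} (hW : M.IsGSub W)
    {g : (M.sub W hW).carrier →ₗ[A.carrier] N.carrier} (hg : g ∈ ghomSet (M.sub W hW) N d)
    (hs : Function.Surjective g) (hk : LinearMap.ker g = W'.comap (M.subι W hW)) :
    SQIso M W W' (N.shift (-d)) := by
  refine ⟨(Submodule.quotEquivOfEq _ _ hk.symm).trans (g.quotKerEquivOfSurjective hs),
    fun i => le_antisymm ?_ fun y hy => ?_⟩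
  · rintro _ ⟨_, ⟨x, hx, rfl⟩, rfl⟩
    exact mem_shift (hg i x hx) (by ring)
  · have hy' : y ∈ N.grading (i - -d) := hy
    obtain ⟨x, hx, rfl⟩ := exists_ghom_preimage (i := i) hg hs (mem_of_eq hy' (by ring))
    exact ⟨_, ⟨x, hx, rfl⟩, rfl⟩

lemma extZero_quot_succ_left {Y : Type} [AddCommGroup Y] [Module A.carrier Y] (hle : W' ≤ W)
    (h : ExtZero A.carrier 1 (M.carrier ⧸ W) Y) (hsq : ExtZero A.carrier 1 (sqMod M W W') Y) :
    ExtZero A.carrier 1 (M.carrier ⧸ W') Y :=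
  (ShortEx.of_le hle).contra_mid hsq h

lemma extZero_quot_succ_right {Y : Type} [AddCommGroup Y] [Module A.carrier Y] (hle : W' ≤ W)
    (h : ExtZero A.carrier 1 Y (M.carrier ⧸ W)) (hsq : ExtZero A.carrier 1 Y (sqMod M W W')) :
    ExtZero A.carrier 1 Y (M.carrier ⧸ W') :=
  (ShortEx.of_le hle).cov_mid hsq h

end Filtrations

/-! ### Filtered modules satisfy the vanishing conditions -/

section Forward

variable (S : AHW A Idx) {V : GMod A}

open GMod

lemma AHW.ext_std_pco (π σ : Idx) :
    ExtZero A.carrier 1 (S.Δ σ).carrier (S.pco π).carrier :=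
  have := S.noeth
  extZero_of_vanish (S.pco_ext π σ)

lemma AHW.finite_pco (π : Idx) : Module.Finite k (S.pco π).carrier :=
  have := (isFiniteLength_iff_isNoetherian_isArtinian.mp (S.pco_finlen π)).2
  finite_of_artinian S.laur _

lemma GFilt.antitone (Φ : GFilt V) : Antitone Φ.F := antitone_nat_of_succ_le Φ.anti

/-- A module with a `Δ`-filtration has no extensions by `∇̄(π)`: the filtration has only finitely
many non-zero subquotients, since each enlarges one of the finite-dimensional spaces
`hom(V, ∇̄(π))`. -/
lemma vanish_of_dFilt (h : HasDFilt S V) (π : Idx) : Ext1Vanish V (S.pco π) := by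
  obtain ⟨Φ, hΦ⟩ := h
  have hsq : ∀ n π, ExtZero A.carrier 1 (sqMod V (Φ.F n) (Φ.F (n + 1))) (S.pco π).carrier := by
    intro n π
    rcases hΦ n with h | ⟨_, ⟨σ, rfl⟩, d, e, -⟩
    · exact ExtZero.of_subsingleton_left _
    · exact (S.ext_std_pco π σ).congr_left e.symm
  have hE : ∀ n π, ExtZero A.carrier 1 (V.carrier ⧸ Φ.F n) (S.pco π).carrier := by
    intro n π
    induction n with
    | zero =>
      have : Subsingleton (V.carrier ⧸ Φ.F 0) :=
        Submodule.Quotient.subsingleton_iff.mpr Φ.first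
      exact ExtZero.of_subsingleton_left _
    | succ n ih => exact extZero_quot_succ_left (Φ.anti n) ih (hsq n π)
  have := S.finite_pco
  let H : ∀ π : Idx, ℕ →o Submodule k (V.carrier →ₗ[A.carrier] (S.pco π).carrier) := fun π =>
    { toFun := fun n =>
        { carrier := {f | Φ.F n ≤ LinearMap.ker f}
          add_mem' := fun hf hg x hx => by
            rw [LinearMap.mem_ker, LinearMap.add_apply, LinearMap.mem_ker.mp (hf hx),
              LinearMap.mem_ker.mp (hg hx), add_zero]
          zero_mem' := fun x _ => rfl
          smul_mem' := fun c f hf x hx => by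
            rw [LinearMap.mem_ker, LinearMap.smul_apply, LinearMap.mem_ker.mp (hf hx), smul_zero] }
      monotone' := fun a b hab f hf => (Φ.antitone hab).trans hf }
  choose n₀ hn₀ using fun π => monotone_stabilizes_iff_noetherian.mpr
    (inferInstance : IsNoetherian k (V.carrier →ₗ[A.carrier] (S.pco π).carrier)) (H π)
  obtain ⟨m, hm⟩ := (Set.finite_range n₀).bddAbove
  have hconst : ∀ n, m ≤ n → Φ.F n ≤ Φ.F (n + 1) := by
    intro n hn
    rcases hΦ n with h | ⟨_, ⟨σ, rfl⟩, d, e, -⟩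
    · exact subsingleton_sq.mp h
    exfalso
    obtain ⟨f₀, -, hf₀, -⟩ := S.pco_hom σ
    obtain ⟨v, hv⟩ := (ShortEx.of_le (Φ.anti n)).extend (hE n σ) (f₀.comp e.toLinearMap)
    have h1 : v.comp (Φ.F (n + 1)).mkQ ∈ H σ (n + 1) := fun x hx => by
      have : (Φ.F (n + 1)).mkQ x = 0 := (Submodule.Quotient.mk_eq_zero _).mpr hx
      rw [LinearMap.mem_ker, LinearMap.comp_apply, this, map_zero]
    have hnσ : n₀ σ ≤ n := (hm ⟨σ, rfl⟩).trans hn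
    rw [← hn₀ σ (n + 1) (hnσ.trans n.le_succ), hn₀ σ n hnσ] at h1
    refine hf₀ (LinearMap.ext fun y => ?_)
    obtain ⟨x, rfl⟩ := e.surjective y
    obtain ⟨x, rfl⟩ := Submodule.mkQ_surjective _ x
    exact (LinearMap.congr_fun hv _).symm.trans (h1 x.2)
  have hbot : Φ.F m = ⊥ := by
    refine (Submodule.eq_bot_iff _).mpr fun x hx => Φ.separated x fun n => ?_
    rcases le_total n m with h | h
    · exact Φ.antitone h hx
    · induction n, h using Nat.le_induction with
      | base => exact hx
      | succ n hn ih => exact hconst n hn ih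
  exact vanish_of_extZero ((hE m π).congr_left (Submodule.quotEquivOfEqBot _ hbot))

/-- A separated filtration of a locally finite-dimensional module bounded below eventually lives
in arbitrarily high degrees. -/
lemma GFilt.exists_above (hL : A.Laurentian) (Φ : GFilt V) (D : ℤ) :
    ∃ n, ∀ x ∈ Φ.F n, ∀ i < D, V.comp i x = 0 := by
  obtain ⟨b, hb⟩ := exists_low hL V
  have := V.finite_grading hL
  let U : Submodule k V.carrier := ⨆ i ∈ Finset.Ico b D, V.grading i
  have hU : Module.Finite k U := Module.Finite.iff_fg.mpr
    (Submodule.fg_biSup _ _ fun i _ => Module.Finite.iff_fg.mp (this i))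
  have : IsArtinian k U := inferInstance
  obtain ⟨n, hn⟩ := IsArtinian.monotone_stabilizes
    (⟨fun n => OrderDual.toDual (((Φ.F n).restrictScalars k).comap U.subtype),
      fun a b h => Submodule.comap_mono (f := U.subtype) (Φ.antitone h)⟩ :
      ℕ →o (Submodule k U)ᵒᵈ)
  refine ⟨n, fun x hx i hi => ?_⟩
  by_cases h : i < b
  · exact hb i h _ (comp_mem _ _ _)
  have hxU : V.comp i x ∈ U := Submodule.mem_iSup_of_mem i (Submodule.mem_iSup_of_mem
        (Finset.mem_Ico.mpr ⟨by omega, by omega⟩) (comp_mem _ _ _))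
  have hxn := isGSub_iff.mp (Φ.graded n) x hx i
  refine Φ.separated _ fun m => ?_
  rcases le_total n m with h | h
  · have h1 := hn m h
    have h2 : (⟨_, hxU⟩ : U) ∈ ((Φ.F n).restrictScalars k).comap U.subtype := hxn
    rw [show ((Φ.F n).restrictScalars k).comap U.subtype =
      ((Φ.F m).restrictScalars k).comap U.subtype from h1] at h2
    exact h2
  · exact Φ.antitone h hxn

lemma vanish_of_pcFilt (h : HasPCFilt S V) (π : Idx) : Ext1Vanish (S.Δ π) V := by
  obtain ⟨Φ, hΦ⟩ := h
  have hE : ∀ n, ExtZero A.carrier 1 (S.Δ π).carrier (V.carrier ⧸ Φ.F n) := by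
    intro n
    induction n with
    | zero =>
      have : Subsingleton (V.carrier ⧸ Φ.F 0) :=
        Submodule.Quotient.subsingleton_iff.mpr Φ.first
      exact ExtZero.of_subsingleton_right _
    | succ n ih =>
      refine extZero_quot_succ_right (Φ.anti n) ih ?_
      rcases hΦ n with h | ⟨_, ⟨σ, rfl⟩, d, e, -⟩
      · exact ExtZero.of_subsingleton_right _
      · exact (S.ext_std_pco σ π).congr_right e.symm
  have := S.noeth
  refine vanish_of_extZero (extZero_of_approx fun D => ?_)
  obtain ⟨n, hn⟩ := Φ.exists_above S.laur D
  exact ⟨Φ.F n, Φ.graded n, hn, hE n⟩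

end Forward

/-! ### Graded simple quotients and submodules -/

section Simples

variable {M : GMod A}

open GMod

lemma isGSimple_quo {W : Submodule A.carrier M.carrier} (hW : M.IsGSub W) (hne : W ≠ ⊤)
    (hmax : ∀ W', M.IsGSub W' → W ≤ W' → W' ≠ ⊤ → W' = W) : IsGSimple (M.quo W hW) := by
  refine ⟨Submodule.Quotient.nontrivial_iff.mpr hne, fun U hU => ?_⟩
  have h1 := isGSub_comap (quoπ_mem hW) hU
  have hmap : (U.comap (M.quoπ W hW)).map (M.quoπ W hW) = U :=
    Submodule.map_comap_eq_of_surjective (quoπ_surj hW) U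
  by_cases h : U.comap (M.quoπ W hW) = ⊤
  · right
    rw [← hmap, h, Submodule.map_top, LinearMap.range_eq_top]
    exact quoπ_surj hW
  · left
    have hle : W ≤ U.comap (M.quoπ W hW) := by
      conv_lhs => rw [← ker_quoπ hW]
      exact Submodule.comap_mono bot_le
    rw [← hmap, hmax _ h1 hle h]
    refine (Submodule.eq_bot_iff _).mpr ?_
    rintro _ ⟨x, hx, rfl⟩
    rw [← LinearMap.mem_ker, ker_quoπ]
    exact hx

variable [IsNoetherianRing A.carrier]

lemma exists_simple_quo [Nontrivial M.carrier] :
    ∃ (W : Submodule A.carrier M.carrier) (hW : M.IsGSub W), IsGSimple (M.quo W hW) := by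
  obtain ⟨W, ⟨hW, hne⟩, hmax⟩ := WellFounded.has_min
    (r := ((· > ·) : Submodule A.carrier M.carrier → _ → Prop)) wellFounded_gt
    {W | M.IsGSub W ∧ W ≠ ⊤} ⟨⊥, isGSub_bot, bot_ne_top⟩
  refine ⟨W, hW, isGSimple_quo hW hne fun W' h1 h2 h3 => ?_⟩
  exact (h2.eq_or_lt.resolve_right (hmax W' ⟨h1, h3⟩)).symm

lemma exists_simple_sub [Nontrivial M.carrier] [IsArtinian A.carrier M.carrier] :
    ∃ (W : Submodule A.carrier M.carrier) (hW : M.IsGSub W), IsGSimple (M.sub W hW) := by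
  obtain ⟨W, ⟨hW, hne⟩, hmin⟩ := WellFounded.has_min
    (r := ((· < ·) : Submodule A.carrier M.carrier → _ → Prop)) wellFounded_lt
    {W | M.IsGSub W ∧ W ≠ ⊥} ⟨⊤, isGSub_top, top_ne_bot⟩
  refine ⟨W, hW, Submodule.nontrivial_iff_ne_bot.mpr hne, fun U hU => ?_⟩
  have h1 := isGSub_map (subι_mem hW) hU
  by_cases h : U.map (M.subι W hW) = ⊥
  · left
    exact Submodule.map_injective_of_injective (subι_inj hW) (h.trans (Submodule.map_bot _).symm)
  · right
    have hle : U.map (M.subι W hW) ≤ W := by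
      rintro _ ⟨x, -, rfl⟩
      exact x.2
    have heq := hle.eq_or_lt.resolve_right (hmin _ ⟨h1, h⟩)
    rw [eq_top_iff]
    intro x _
    have hx : M.subι W hW x ∈ U.map (M.subι W hW) := by rw [heq]; exact x.2
    obtain ⟨y, hy, hxy⟩ := hx
    rwa [← subι_inj hW hxy]

end Simples

section Weights

variable (S : AHW A Idx)

open GMod

namespace AHW

/-- `ρ` is a weight of `X` if there is a non-zero map `P(ρ) → X`, that is, if `L(ρ)` is (up to
shift) a composition factor of `X`. -/
def HasWt (ρ : Idx) (X : Type) [AddCommGroup X] [Module A.carrier X] : Prop :=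
  ∃ f : (S.P ρ).carrier →ₗ[A.carrier] X, f ≠ 0

variable {S} {ρ : Idx} {X Y Z : Type} [AddCommGroup X] [Module A.carrier X] [AddCommGroup Y]
  [Module A.carrier Y] [AddCommGroup Z] [Module A.carrier Z]

variable (S) in
lemma projective_P (π : Idx) : Module.Projective A.carrier (S.P π).carrier := (S.proj π).projective

lemma HasWt.of_inj (h : S.HasWt ρ X) {f : X →ₗ[A.carrier] Y} (hf : Function.Injective f) :
    S.HasWt ρ Y := by
  obtain ⟨g, hg⟩ := h
  refine ⟨f.comp g, fun h0 => hg (LinearMap.ext fun x => hf ?_)⟩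
  rw [LinearMap.zero_apply, map_zero]
  exact LinearMap.congr_fun h0 x

lemma HasWt.of_surj (h : S.HasWt ρ Y) {f : X →ₗ[A.carrier] Y} (hf : Function.Surjective f) :
    S.HasWt ρ X := by
  obtain ⟨g, hg⟩ := h
  have := S.projective_P ρ
  obtain ⟨l, rfl⟩ := Module.projective_lifting_property f g hf
  refine ⟨l, fun h0 => hg ?_⟩
  rw [h0, LinearMap.comp_zero]

lemma HasWt.exists_ghom {X : GMod A} (h : S.HasWt ρ X.carrier) :
    ∃ d, ∃ f ∈ ghomSet (S.P ρ) X d, f ≠ 0 := by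
  obtain ⟨f, hf⟩ := h
  obtain ⟨d, hd⟩ := exists_hcomp_ne (M := S.P ρ) hf
  exact ⟨d, _, hcomp_mem _ _, hd⟩

lemma exists_ghom_lift_P {N Q : GMod A} {g : N.carrier →ₗ[A.carrier] Q.carrier} {d e : ℤ}
    (hg : g ∈ ghomSet N Q d) (hs : Function.Surjective g)
    {h : (S.P ρ).carrier →ₗ[A.carrier] Q.carrier} (hh : h ∈ ghomSet (S.P ρ) Q e) :
    ∃ l ∈ ghomSet (S.P ρ) N (e - d), g.comp l = h :=
  have := S.projective_P ρ
  exists_ghom_lift hg hh (Module.projective_lifting_property g h hs)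

lemma wt_L (π : Idx) : S.HasWt π (S.L π).carrier := by
  obtain ⟨p, hp, -⟩ := S.cover π
  have := (S.simple π).1
  refine ⟨p.1, fun h => ?_⟩
  obtain ⟨x, hx⟩ := exists_ne (0 : (S.L π).carrier)
  obtain ⟨y, rfl⟩ := hp x
  exact hx (by rw [h]; rfl)

lemma wt_std {σ : Idx} (h : S.HasWt ρ (S.Δ σ).carrier) : ρ ≤ σ := by
  obtain ⟨d, f, hf, hf0⟩ := h.exists_ghom
  obtain ⟨dm, hs, hk⟩ := S.std_def σ
  obtain ⟨l, hl, rfl⟩ := exists_ghom_lift_P (ghom_of_hom dm) hs hf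
  by_contra hle
  refine hf0 (LinearMap.ext fun x => ?_)
  have : l x ∈ LinearMap.ker dm.1 := by
    rw [hk]
    exact Submodule.mem_iSup_of_mem ⟨ρ, l⟩ (Submodule.mem_iSup_of_mem hle
      (Submodule.mem_iSup_of_mem ⟨_, hl⟩ ⟨x, rfl⟩))
  exact this

section

variable [IsNoetherianRing A.carrier]

variable (S) in
lemma exists_to_L (M : GMod A) [Nontrivial M.carrier] :
    ∃ (τ : Idx) (d : ℤ), ∃ g ∈ ghomSet M (S.L τ) d, Function.Surjective g := by
  obtain ⟨W, hW, hs⟩ := exists_simple_quo (M := M)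
  obtain ⟨τ, d, ⟨e⟩⟩ := S.simple_complete _ hs
  have he : (show (M.quo W hW).carrier →ₗ[A.carrier] (S.L τ).carrier from e.e.toLinearMap) ∈
      ghomSet (M.quo W hW) (S.L τ) (-d) := fun i x hx => e.mem i x hx
  exact ⟨τ, _, _, ghom_comp (quoπ_mem hW) he, e.e.surjective.comp (quoπ_surj hW)⟩

variable (S) in
lemma exists_from_L (M : GMod A) [Nontrivial M.carrier] [IsArtinian A.carrier M.carrier] :
    ∃ (τ : Idx) (d : ℤ), ∃ g ∈ ghomSet (S.L τ) M d, Function.Injective g := by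
  obtain ⟨W, hW, hs⟩ := exists_simple_sub (M := M)
  obtain ⟨τ, d, ⟨e⟩⟩ := S.simple_complete _ hs
  have he : (show (S.L τ).carrier →ₗ[A.carrier] (M.sub W hW).carrier from
      e.e.symm.toLinearMap) ∈ ghomSet (S.L τ) (M.sub W hW) d := fun i x hx =>
    e.mem' (i + d) x (mem_shift hx (by ring))
  exact ⟨τ, _, _, ghom_comp he (subι_mem hW), (subι_inj hW).comp e.e.symm.injective⟩

variable (S) in
lemma exists_wt (M : GMod A) [Nontrivial M.carrier] : ∃ τ, S.HasWt τ M.carrier := by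
  obtain ⟨τ, d, g, -, hs⟩ := S.exists_to_L M
  exact ⟨τ, (wt_L τ).of_surj hs⟩

end

end AHW

end Weights

/-! ### Standard modules -/

section Standard

variable (S : AHW A Idx) [IsNoetherianRing A.carrier]

open GMod

namespace AHW

/-- The filtration of `ker (P(π) ↠ Δ(π))` as an induction principle: a property of submodules of
`P(π)` that holds for `⊥` and passes up along subquotients `Δ(σ)`, `σ > π`, holds for the
kernel. -/
lemma exists_std (π : Idx) : ∃ g : (S.P π).carrier →ₗ[A.carrier] (S.Δ π).carrier,
    g ∈ ghomSet (S.P π) (S.Δ π) 0 ∧ Function.Surjective g ∧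
    ∀ Q : Submodule A.carrier (S.P π).carrier → Prop, Q ⊥ →
      (∀ (U U' : Submodule A.carrier (S.P π).carrier) (hU : (S.P π).IsGSub U) (σ : Idx) (d : ℤ)
        (g : ((S.P π).sub U hU).carrier →ₗ[A.carrier] (S.Δ σ).carrier), π < σ → U' ≤ U →
        g ∈ ghomSet ((S.P π).sub U hU) (S.Δ σ) d → Function.Surjective g →
        LinearMap.ker g = U'.comap ((S.P π).subι U hU) → Q U' → Q U) →
      Q (LinearMap.ker g) := by
  obtain ⟨Φ, ⟨N, hN⟩, hd, hstep⟩ := S.ker_filt π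
  have hd' : SQIso (S.P π) (Φ.F 0) (Φ.F 1) ((S.Δ π).shift 0) := by
    obtain ⟨e, he⟩ := hd
    refine ⟨e, fun i => (he i).trans ?_⟩
    change _ = (S.Δ π).grading (i - 0)
    rw [sub_zero]
  obtain ⟨g, hg, hgs, hgk⟩ := hd'.exists_map (Φ.graded 0)
  have htop : ∀ x, x ∈ Φ.F 0 := fun x => by rw [Φ.first]; trivial
  let ι : (S.P π).carrier →ₗ[A.carrier] ((S.P π).sub (Φ.F 0) (Φ.graded 0)).carrier :=
    LinearMap.codRestrict (Φ.F 0) LinearMap.id htop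
  have hker : LinearMap.ker (g.comp ι) = Φ.F 1 := by
    ext x
    have h : ι x ∈ LinearMap.ker g ↔ x ∈ Φ.F 1 := by rw [hgk]; rfl
    exact h
  refine ⟨g.comp ι, fun i x hx => ?_, fun y => ?_, fun Q h0 hQ => ?_⟩
  · have := hg i (ι x) hx
    rwa [neg_zero] at this
  · obtain ⟨x, rfl⟩ := hgs y
    exact ⟨x.1, rfl⟩
  rw [hker]
  have key : ∀ m n, 1 ≤ n → n + m = N + 1 → Q (Φ.F n) := by
    intro m
    induction m with
    | zero =>
      intro n _ h
      have : Φ.F n = ⊥ := le_bot_iff.mp (hN ▸ Φ.antitone (by omega : N ≤ n))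
      rwa [this]
    | succ m ih =>
      intro n hn h
      have h1 := ih (n + 1) (by omega) (by omega)
      rcases hstep n hn with hs | ⟨σ, hσ, d, hs⟩
      · rwa [le_antisymm (subsingleton_sq.mp hs) (Φ.anti n)]
      · obtain ⟨f, hf, hfs, hfk⟩ := hs.exists_map (Φ.graded n)
        exact hQ _ _ (Φ.graded n) σ _ f hσ (Φ.anti n) hf hfs hfk h1
  exact key N 1 le_rfl (by omega)

/-- The projection `P(π) ↠ Δ(π)`. -/
noncomputable def stdπ (π : Idx) : (S.P π).carrier →ₗ[A.carrier] (S.Δ π).carrier :=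
  (S.exists_std π).choose

lemma stdπ_mem (π : Idx) : S.stdπ π ∈ ghomSet (S.P π) (S.Δ π) 0 :=
  (S.exists_std π).choose_spec.1

lemma stdπ_surj (π : Idx) : Function.Surjective (S.stdπ π) :=
  (S.exists_std π).choose_spec.2.1

lemma ext_ker_std {π : Idx} {n : ℕ} {Y : Type} [AddCommGroup Y] [Module A.carrier Y]
    (h : ∀ σ, π < σ → ExtZero A.carrier n (S.Δ σ).carrier Y) :
    ExtZero A.carrier n (LinearMap.ker (S.stdπ π)) Y := by
  refine (S.exists_std π).choose_spec.2.2
    (fun U => ExtZero A.carrier n U Y) (ExtZero.of_subsingleton_left n) ?_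
  intro U U' hU σ d g hσ hle hg hgs hgk h'
  have hex := ShortEx.of_ker g hgs
  refine ShortEx.contra_mid hex ?_ (h σ hσ)
  refine h'.congr_left ?_
  rw [hgk]
  exact (Submodule.comapSubtypeEquivOfLe hle).symm

/-- Homogeneous maps out of `P(π)` factor through `Δ(π)` if their target has no weights `σ > π` in
a range of low degrees; the constant `c` depends on `π` only. -/
lemma exists_factor_const (π : Idx) : ∃ c : ℤ, ∀ (X : GMod A) (e : ℤ),
    (∀ σ, π < σ → ∀ d < e + c, ∀ f ∈ ghomSet (S.P σ) X d, f = 0) →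
    ∀ h ∈ ghomSet (S.P π) X e, LinearMap.ker (S.stdπ π) ≤ LinearMap.ker h := by
  refine (S.exists_std π).choose_spec.2.2 (fun U => ∃ c : ℤ, ∀ (X : GMod A) (e : ℤ),
    (∀ σ, π < σ → ∀ d < e + c, ∀ f ∈ ghomSet (S.P σ) X d, f = 0) →
    ∀ h ∈ ghomSet (S.P π) X e, U ≤ LinearMap.ker h) ⟨0, fun _ _ _ _ _ => bot_le⟩ ?_
  rintro U U' hU σ d g hσ hle hg hgs hgk ⟨c, hc⟩
  refine ⟨max c (1 - d), fun X e hX h hh => ?_⟩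
  have h1 := hc X e (fun σ hσ d hd => hX σ hσ d (by omega)) h hh
  have h2 : LinearMap.ker g ≤ LinearMap.ker (h.comp ((S.P π).subι U hU)) := by
    rw [hgk, LinearMap.ker_comp]
    exact Submodule.comap_mono h1
  obtain ⟨l, hl⟩ := exists_descend hgs h2
  have hl' : l ∈ ghomSet (S.Δ σ) X (0 + e - d) := by
    refine ghom_of_comp_surj hg hgs ?_
    rw [hl]
    exact ghom_comp (subι_mem hU) hh
  have h3 := hX σ hσ (0 + (0 + e - d)) (by omega) _ (ghom_comp (S.stdπ_mem σ) hl')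
  intro x hx
  obtain ⟨y, hy⟩ := S.stdπ_surj σ (g ⟨x, hx⟩)
  have h4 : h x = l (g ⟨x, hx⟩) := (LinearMap.congr_fun hl ⟨x, hx⟩).symm
  rw [LinearMap.mem_ker, h4, ← hy]
  exact LinearMap.congr_fun h3 y

lemma ker_std_le {π : Idx} {X : GMod A} (hX : ∀ σ, π < σ → ¬ S.HasWt σ X.carrier) {e : ℤ}
    {h : (S.P π).carrier →ₗ[A.carrier] X.carrier} (hh : h ∈ ghomSet (S.P π) X e) :
    LinearMap.ker (S.stdπ π) ≤ LinearMap.ker h := by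
  obtain ⟨c, hc⟩ := S.exists_factor_const π
  exact hc X e (fun σ hσ d _ f _ => by_contra fun h0 => hX σ hσ ⟨f, h0⟩) h hh

/-- Vanishing of `Ext¹(Δ(σ), Y)` for all `σ` propagates to `Ext²`. -/
lemma ext_two {Y : Type} [AddCommGroup Y] [Module A.carrier Y]
    (h : ∀ σ, ExtZero A.carrier 1 (S.Δ σ).carrier Y) (π : Idx) :
    ExtZero A.carrier 2 (S.Δ π).carrier Y :=
  have := S.projective_P π
  (ShortEx.of_ker (S.stdπ π) (S.stdπ_surj π)).contra_right (n := 1)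
    (S.ext_ker_std fun σ _ => h σ) (ExtZero.of_projective 1)

end AHW

end Standard

/-! ### Heads of standard modules, socles of proper costandard modules -/

section HeadSocle

variable {M N : GMod A}

open GMod

/-- A bijective homogeneous map as a graded isomorphism onto a shift. -/
noncomputable def gisoOfBijective {f : M.carrier →ₗ[A.carrier] N.carrier} {d : ℤ}
    (hf : f ∈ ghomSet M N d) (hb : Function.Bijective f) : GIso M (N.shift (-d)) where
  e := LinearEquiv.ofBijective f hb
  mem i x hx := mem_shift (hf i x hx) (by ring)
  mem' i y hy := by
    have hy' : y ∈ N.grading (i - -d) := hy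
    obtain ⟨x, hx, rfl⟩ := exists_ghom_preimage (i := i) hf hb.2 (mem_of_eq hy' (by ring))
    have : (LinearEquiv.ofBijective f hb).symm (f x) = x :=
      LinearEquiv.ofBijective_symm_apply_apply f x
    exact this.symm ▸ hx

lemma IsGSimple.surjective (hN : IsGSimple N) {f : M.carrier →ₗ[A.carrier] N.carrier} {d : ℤ}
    (hf : f ∈ ghomSet M N d) (h0 : f ≠ 0) : Function.Surjective f :=
  LinearMap.range_eq_top.mp ((hN.2 _ (isGSub_range hf)).resolve_left
    fun h => h0 (LinearMap.range_eq_bot.mp h))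

lemma IsGSimple.injective (hM : IsGSimple M) {f : M.carrier →ₗ[A.carrier] N.carrier} {d : ℤ}
    (hf : f ∈ ghomSet M N d) (h0 : f ≠ 0) : Function.Injective f :=
  LinearMap.ker_eq_bot.mp ((hM.2 _ (isGSub_ker hf)).resolve_right
    fun h => h0 (LinearMap.ker_eq_top.mp h))

variable (S : AHW A Idx)

namespace AHW

variable {S} in
lemma eq_of_wt_L {σ τ : Idx} (h : S.HasWt σ (S.L τ).carrier) : σ = τ := by
  obtain ⟨d, f, hf, h0⟩ := h.exists_ghom
  obtain ⟨p, hp, hsup⟩ := S.cover σ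
  have hfs := (S.simple τ).surjective hf h0
  have hle : LinearMap.ker f ≤ LinearMap.ker p.1 := by
    rcases (S.simple σ).2 _ (isGSub_map (ghom_of_hom p) (isGSub_ker hf)) with h | h
    · exact fun x hx => (Submodule.mem_bot A.carrier).mp (h ▸ Submodule.mem_map_of_mem hx)
    · refine absurd (LinearMap.ker_eq_top.mp (hsup _ (isGSub_ker hf) ?_)) h0
      rw [← Submodule.comap_map_eq, h, Submodule.comap_top]
  obtain ⟨l, hl⟩ := exists_descend hfs hle
  have hl' : l ∈ ghomSet (S.L τ) (S.L σ) (0 - d) :=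
    ghom_of_comp_surj hf hfs (hl ▸ ghom_of_hom p)
  have hls : Function.Surjective l := fun y => by
    obtain ⟨x, rfl⟩ := hp y
    exact ⟨f x, LinearMap.congr_fun hl x⟩
  have hl0 : l ≠ 0 := by
    rintro rfl
    have := (S.simple σ).1
    obtain ⟨y, hy⟩ := exists_ne (0 : (S.L σ).carrier)
    obtain ⟨x, rfl⟩ := hls y
    exact hy rfl
  exact (S.simple_irred τ σ _
    ⟨gisoOfBijective hl' ⟨(S.simple τ).injective hl' hl0, hls⟩⟩).symm

lemma artinian_pco (τ : Idx) : IsArtinian A.carrier (S.pco τ).carrier :=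
  (isFiniteLength_iff_isNoetherian_isArtinian.mp (S.pco_finlen τ)).2

variable [IsNoetherianRing A.carrier]

/-- `L(π)` is the graded head of `Δ(π)`. -/
lemma exists_head (π : Idx) : ∃ q : (S.Δ π).carrier →ₗ[A.carrier] (S.L π).carrier,
    q ∈ ghomSet (S.Δ π) (S.L π) 0 ∧ Function.Surjective q ∧
    ∀ W, (S.Δ π).IsGSub W → W ≠ ⊤ → W ≤ LinearMap.ker q := by
  obtain ⟨p, hp, hsup⟩ := S.cover π
  have hk := S.ker_std_le (π := π) (X := S.L π) (fun σ hσ h => hσ.ne' (eq_of_wt_L h))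
    (ghom_of_hom p)
  obtain ⟨q, hq⟩ := exists_descend (S.stdπ_surj π) hk
  have hqs : Function.Surjective q := fun y => by
    obtain ⟨x, rfl⟩ := hp y
    exact ⟨S.stdπ π x, LinearMap.congr_fun hq x⟩
  have hqm : q ∈ ghomSet (S.Δ π) (S.L π) (0 - 0) :=
    ghom_of_comp_surj (S.stdπ_mem π) (S.stdπ_surj π) (hq ▸ ghom_of_hom p)
  rw [sub_zero] at hqm
  refine ⟨q, hqm, hqs, fun W hW hne => ?_⟩
  rcases (S.simple π).2 _ (isGSub_map hqm hW) with h | h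
  · exact fun x hx => (Submodule.mem_bot A.carrier).mp (h ▸ Submodule.mem_map_of_mem hx)
  exfalso
  have h1 : W.comap (S.stdπ π) ⊔ LinearMap.ker p.1 = ⊤ := by
    rw [eq_top_iff]
    intro x _
    obtain ⟨w, hw, hwx⟩ : q (S.stdπ π x) ∈ W.map q := h ▸ trivial
    obtain ⟨y, rfl⟩ := S.stdπ_surj π w
    refine Submodule.mem_sup.mpr ⟨y, hw, x - y, ?_, by abel⟩
    rw [LinearMap.mem_ker, ← hq, map_sub, LinearMap.comp_apply, LinearMap.comp_apply, hwx,
      sub_self]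
  have h2 := hsup _ (isGSub_comap (S.stdπ_mem π) hW) h1
  refine hne (eq_top_iff.mpr fun y _ => ?_)
  obtain ⟨x, rfl⟩ := S.stdπ_surj π y
  exact (h2 ▸ trivial : x ∈ W.comap (S.stdπ π))

/-- The projection `Δ(π) ↠ L(π)` onto the head. -/
noncomputable def headπ (π : Idx) : (S.Δ π).carrier →ₗ[A.carrier] (S.L π).carrier :=
  (S.exists_head π).choose

lemma headπ_mem (π : Idx) : S.headπ π ∈ ghomSet (S.Δ π) (S.L π) 0 :=
  (S.exists_head π).choose_spec.1

lemma headπ_surj (π : Idx) : Function.Surjective (S.headπ π) :=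
  (S.exists_head π).choose_spec.2.1

lemma le_ker_headπ {π : Idx} {W : Submodule A.carrier (S.Δ π).carrier} (hW : (S.Δ π).IsGSub W)
    (h : W ≠ ⊤) : W ≤ LinearMap.ker (S.headπ π) :=
  (S.exists_head π).choose_spec.2.2 W hW h

variable {S} in
/-- Every weight of a module is bounded by a weight `σ` occurring in it through `Δ(σ)`. -/
lemma HasWt.exists_std_map {X : GMod A} {ρ : Idx} (h : S.HasWt ρ X.carrier) :
    ∃ σ, ρ ≤ σ ∧ ∃ d, ∃ f ∈ ghomSet (S.Δ σ) X d, f ≠ 0 := by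
  obtain ⟨m, ⟨hm, hρ⟩, hmax⟩ := WellFounded.has_min (r := ((· > ·) : Idx → Idx → Prop))
    wellFounded_gt {σ | S.HasWt σ X.carrier ∧ ρ ≤ σ} ⟨ρ, h, le_rfl⟩
  obtain ⟨d, f, hf, h0⟩ := hm.exists_ghom
  have hk := S.ker_std_le (fun σ hσ hw => hmax σ ⟨hw, hρ.trans hσ.le⟩ hσ) hf
  obtain ⟨l, rfl⟩ := exists_descend (S.stdπ_surj m) hk
  refine ⟨m, hρ, _, l, ghom_of_comp_surj (S.stdπ_mem m) (S.stdπ_surj m) hf, ?_⟩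
  rintro rfl
  exact h0 rfl

variable {S} in
lemma wt_pco {ρ τ : Idx} (h : S.HasWt ρ (S.pco τ).carrier) : ρ ≤ τ := by
  obtain ⟨σ, hρ, d, f, hf, h0⟩ := h.exists_std_map
  obtain ⟨-, -, -, -, h1⟩ := S.pco_hom τ
  by_contra hle
  exact h0 (h1 σ d f hf fun h => hle (h ▸ hρ))

/-- `L(τ)` embeds into `∇̄(τ)`, and every homogeneous map `Δ(τ) → ∇̄(τ)` is a multiple of
`Δ(τ) ↠ L(τ) ↪ ∇̄(τ)`. -/
lemma exists_socle (τ : Idx) : ∃ j : (S.L τ).carrier →ₗ[A.carrier] (S.pco τ).carrier,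
    j ∈ ghomSet (S.L τ) (S.pco τ) 0 ∧ Function.Injective j ∧
    ∀ d, ∀ f ∈ ghomSet (S.Δ τ) (S.pco τ) d, ∃ c : k, f = c • j.comp (S.headπ τ) := by
  obtain ⟨f₀, hf₀, hne, h1, h2⟩ := S.pco_hom τ
  have := S.artinian_pco τ
  have : Nontrivial (S.pco τ).carrier := by
    by_contra hn
    rw [not_nontrivial_iff_subsingleton] at hn
    exact hne (LinearMap.ext fun x => Subsingleton.elim _ _)
  obtain ⟨ρ, d, g, hg, hgi⟩ := S.exists_from_L (S.pco τ)
  have hgq := ghom_comp (S.headπ_mem ρ) hg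
  have hgq0 : g.comp (S.headπ ρ) ≠ 0 := fun h => by
    have := (S.simple ρ).1
    obtain ⟨y, hy⟩ := exists_ne (0 : (S.L ρ).carrier)
    obtain ⟨x, rfl⟩ := S.headπ_surj ρ y
    refine hy (hgi ?_)
    rw [map_zero]
    exact LinearMap.congr_fun h x
  obtain rfl : ρ = τ := by_contra fun h => hgq0 (h2 ρ _ _ hgq h)
  obtain ⟨c, hc⟩ := h1 _ _ hgq
  have hc0 : c ≠ 0 := by
    rintro rfl
    exact hgq0 (by rw [hc, zero_smul])
  have hj : (c⁻¹ • g).comp (S.headπ ρ) = f₀ := by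
    rw [LinearMap.smul_comp, hc, smul_smul, inv_mul_cancel₀ hc0, one_smul]
  have hjm := ghom_of_comp_surj (S.headπ_mem ρ) (S.headπ_surj ρ) (h := c⁻¹ • g) (hj ▸ hf₀)
  rw [sub_zero] at hjm
  refine ⟨c⁻¹ • g, hjm, fun x y hxy => hgi ?_, fun d f hf => ?_⟩
  · have h3 : c • c⁻¹ • g x = c • c⁻¹ • g y := congrArg (c • ·) hxy
    rwa [smul_smul, smul_smul, mul_inv_cancel₀ hc0, one_smul, one_smul] at h3
  · rw [hj]
    exact h1 d f hf

/-- The inclusion `L(π) ↪ ∇̄(π)` of the socle. -/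
noncomputable def socι (π : Idx) : (S.L π).carrier →ₗ[A.carrier] (S.pco π).carrier :=
  (S.exists_socle π).choose

lemma socι_mem (π : Idx) : S.socι π ∈ ghomSet (S.L π) (S.pco π) 0 :=
  (S.exists_socle π).choose_spec.1

lemma socι_inj (π : Idx) : Function.Injective (S.socι π) :=
  (S.exists_socle π).choose_spec.2.1

lemma exists_smul_socι {τ : Idx} {d : ℤ} {f : (S.Δ τ).carrier →ₗ[A.carrier] (S.pco τ).carrier}
    (hf : f ∈ ghomSet (S.Δ τ) (S.pco τ) d) : ∃ c : k, f = c • (S.socι τ).comp (S.headπ τ) :=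
  (S.exists_socle τ).choose_spec.2.2 d f hf

/-- The weights of `∇̄(τ)/L(τ)` are `< τ`. -/
lemma wt_pco_quo {ρ τ : Idx}
    (h : S.HasWt ρ ((S.pco τ).quo _ (isGSub_range (S.socι_mem τ))).carrier) : ρ < τ := by
  have hW := isGSub_range (S.socι_mem τ)
  refine (wt_pco (h.of_surj (quoπ_surj hW))).lt_of_ne ?_
  rintro rfl
  obtain ⟨d, f, hf, h0⟩ := h.exists_ghom
  obtain ⟨l, hl, rfl⟩ := exists_ghom_lift_P (quoπ_mem hW) (quoπ_surj hW) hf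
  have hk := S.ker_std_le (fun σ hσ hw => hσ.not_ge (wt_pco hw)) hl
  obtain ⟨l', rfl⟩ := exists_descend (S.stdπ_surj ρ) hk
  obtain ⟨c, rfl⟩ := S.exists_smul_socι (ghom_of_comp_surj (S.stdπ_mem ρ) (S.stdπ_surj ρ) hl)
  refine h0 (LinearMap.ext fun x => ?_)
  have : c • (S.socι ρ) (S.headπ ρ (S.stdπ ρ x)) ∈
      LinearMap.ker ((S.pco ρ).quoπ _ hW) := by
    rw [ker_quoπ, ← LinearMap.map_smul_of_tower]
    exact ⟨_, rfl⟩
  exact this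

lemma range_socι_le {τ : Idx} {W : Submodule A.carrier (S.pco τ).carrier}
    (hW : (S.pco τ).IsGSub W) (h : W ≠ ⊥) : LinearMap.range (S.socι τ) ≤ W := by
  obtain ⟨-, -, -, -, h2⟩ := S.pco_hom τ
  have := S.artinian_pco τ
  have : Nontrivial ((S.pco τ).sub W hW).carrier := Submodule.nontrivial_iff_ne_bot.mpr h
  have : IsArtinian A.carrier ((S.pco τ).sub W hW).carrier :=
    inferInstanceAs (IsArtinian A.carrier W)
  obtain ⟨ρ, d, g, hg, hgi⟩ := S.exists_from_L ((S.pco τ).sub W hW)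
  have hgq := ghom_comp (S.headπ_mem ρ) (ghom_comp hg (subι_mem hW))
  obtain ⟨y, hy⟩ := @exists_ne _ (S.simple ρ).1 (0 : (S.L ρ).carrier)
  obtain ⟨x, rfl⟩ := S.headπ_surj ρ y
  have hgq0 : (((S.pco τ).subι W hW).comp g).comp (S.headπ ρ) ≠ 0 := fun h => by
    refine hy (hgi (subι_inj hW ?_))
    rw [map_zero, map_zero]
    exact LinearMap.congr_fun h x
  obtain rfl : ρ = τ := by_contra fun h => hgq0 (h2 ρ _ _ hgq h)
  obtain ⟨c, hc⟩ := S.exists_smul_socι hgq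
  have hc0 : c ≠ 0 := by
    rintro rfl
    exact hgq0 (by rw [hc, zero_smul])
  rintro _ ⟨z, rfl⟩
  obtain ⟨z, rfl⟩ := S.headπ_surj ρ z
  have h3 : S.socι ρ (S.headπ ρ z) = c⁻¹ • (S.pco ρ).subι W hW (g (S.headπ ρ z)) := by
    have h4 := LinearMap.congr_fun hc z
    simp only [LinearMap.comp_apply, LinearMap.smul_apply] at h4
    rw [h4, smul_smul, inv_mul_cancel₀ hc0, one_smul]
  rw [h3]
  exact W.smul_of_tower_mem c⁻¹ (g (S.headπ ρ z)).2

end AHW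

end HeadSocle

/-! ### Assembling filtrations -/

section Chains

variable {α : Type} {r : α → α → Prop}

lemma exists_path {a b : α} (h : Relation.ReflTransGen r a b) :
    ∃ (m : ℕ) (u : ℕ → α), u 0 = a ∧ (∀ n, m ≤ n → u n = b) ∧
      ∀ n, u n = u (n + 1) ∨ r (u n) (u (n + 1)) := by
  induction h using Relation.ReflTransGen.head_induction_on with
  | refl => exact ⟨0, fun _ => b, rfl, fun _ _ => rfl, fun _ => Or.inl rfl⟩
  | @head x y hac _ ih =>
    obtain ⟨m, u, h0, hm, hr⟩ := ih
    refine ⟨m + 1, fun n => Nat.casesOn n x u, rfl, fun n hn => ?_, fun n => ?_⟩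
    · obtain ⟨n, rfl⟩ : ∃ l, n = l + 1 := ⟨n - 1, by omega⟩
      exact hm n (by omega)
    · cases n with
      | zero => right; change r _ (u 0); rwa [h0]
      | succ n => exact hr n

/-- Finite chains from `s i` to `s (i + 1)` are concatenated to one infinite chain. -/
lemma exists_chain {s : ℕ → α} (h : ∀ i, Relation.ReflTransGen r (s i) (s (i + 1))) :
    ∃ t : ℕ → α, t 0 = s 0 ∧ (∀ n, t n = t (n + 1) ∨ r (t n) (t (n + 1))) ∧ ∀ i, ∃ n, t n = s i := by
  choose m u h0 hm hr using fun i => exists_path (h i)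
  -- the position `(i, j)` points at the `j`-th entry of the `i`-th chain
  let pos : ℕ → ℕ × ℕ := fun n => Nat.rec (0, 0)
    (fun _ p => if p.2 < m p.1 then (p.1, p.2 + 1) else (p.1 + 1, 0)) n
  have hpos : ∀ n, pos (n + 1) =
      if (pos n).2 < m (pos n).1 then ((pos n).1, (pos n).2 + 1) else ((pos n).1 + 1, 0) :=
    fun n => rfl
  refine ⟨fun n => u (pos n).1 (pos n).2, h0 0, fun n => ?_, fun i => ?_⟩
  · dsimp only
    rw [hpos]
    split_ifs with hlt
    · exact hr _ _
    · left
      rw [hm _ _ (not_lt.mp hlt), h0]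
  · have key : ∃ n, pos n = (i, 0) := by
      induction i with
      | zero => exact ⟨0, rfl⟩
      | succ i ih =>
        obtain ⟨n, hn⟩ := ih
        have hj : ∀ j ≤ m i, pos (n + j) = (i, j) := by
          intro j hj
          induction j with
          | zero => exact hn
          | succ j ih =>
            rw [← add_assoc, hpos, ih (by omega), if_pos (by exact hj)]
        refine ⟨n + m i + 1, ?_⟩
        rw [hpos, hj _ le_rfl, if_neg (lt_irrefl _)]
    obtain ⟨n, hn⟩ := key
    exact ⟨n, by dsimp only; rw [hn, h0]⟩

end Chains

section Assemble

variable {V : GMod A}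

open GMod

/-- One step of a filtration of `V` with subquotients in `𝒮`. -/
def FiltStep (V : GMod A) (𝒮 : Set (GMod A)) (W W' : Submodule A.carrier V.carrier) : Prop :=
  W' ≤ W ∧ V.IsGSub W' ∧ ∃ N ∈ 𝒮, ∃ d : ℤ, SQIso V W W' (N.shift d)

lemma exists_filtBy {𝒮 : Set (GMod A)} {s : ℕ → Submodule A.carrier V.carrier} (h0 : s 0 = ⊤)
    (hs : ∀ i, Relation.ReflTransGen (FiltStep V 𝒮) (s i) (s (i + 1)))
    (hsep : ∀ x, (∀ i, x ∈ s i) → x = 0) : ∃ Φ : GFilt V, FiltBy V Φ 𝒮 := by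
  obtain ⟨t, ht0, ht, hts⟩ := exists_chain hs
  refine ⟨⟨t, ht0.trans h0, fun n => ?_, fun n => ?_, fun x hx => hsep x fun i => ?_⟩, fun n => ?_⟩
  · rcases ht n with h | h
    · exact h.ge
    · exact h.1
  · induction n with
    | zero => rw [ht0, h0]; exact isGSub_top
    | succ n ih =>
      rcases ht n with h | h
      · exact h ▸ ih
      · exact h.2.1
  · obtain ⟨n, hn⟩ := hts i
    exact hn ▸ hx n
  · rcases ht n with h | h
    · exact Or.inl (subsingleton_sq.mpr h.le)
    · exact Or.inr h.2.2

end Assemble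

/-! ### Modules with vanishing `Ext¹` into proper costandard modules -/

section Devissage

variable (S : AHW A Idx) [IsNoetherianRing A.carrier]

open GMod

namespace AHW

/-- Dévissage: a property of finite-dimensional graded modules can be checked by splitting off a
simple submodule. -/
lemma fd_induction {Q : GMod A → Prop} (h0 : ∀ Y : GMod A, Subsingleton Y.carrier → Q Y)
    (hs : ∀ (Y : GMod A) (τ : Idx) (d : ℤ) (g : (S.L τ).carrier →ₗ[A.carrier] Y.carrier)
      (hg : g ∈ ghomSet (S.L τ) Y d), Function.Injective g →
      Q (Y.quo _ (isGSub_range hg)) → Q Y) (Y : GMod A) (hY : Module.Finite k Y.carrier) : Q Y := by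
  induction hn : Module.finrank k Y.carrier using Nat.strong_induction_on generalizing Y with
  | _ n ih =>
    by_cases htriv : Subsingleton Y.carrier
    · exact h0 Y htriv
    rw [not_subsingleton_iff_nontrivial] at htriv
    have : IsArtinian A.carrier Y.carrier := isArtinian_of_tower k inferInstance
    obtain ⟨τ, d, g, hg, hgi⟩ := S.exists_from_L Y
    have hfin : Module.Finite k (Y.quo _ (isGSub_range hg)).carrier :=
      inferInstanceAs (Module.Finite k (Y.carrier ⧸ ((LinearMap.range g).restrictScalars k)))
    refine hs Y τ d g hg hgi (ih _ ?_ _ hfin rfl)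
    rw [← hn]
    have h1 := ((LinearMap.range g).restrictScalars k).finrank_quotient_add_finrank
    have h2 : 0 < Module.finrank k ((LinearMap.range g).restrictScalars k) := by
      have := (S.simple τ).1
      obtain ⟨y, hy⟩ := exists_ne (0 : (S.L τ).carrier)
      rw [Module.finrank_pos_iff]
      refine ⟨⟨⟨g y, y, rfl⟩, 0, fun h => hy (hgi ?_)⟩⟩
      rw [map_zero]
      exact congrArg Subtype.val h
    have h3 : Module.finrank k (Y.quo _ (isGSub_range hg)).carrier =
      Module.finrank k (Y.carrier ⧸ ((LinearMap.range g).restrictScalars k)) := rfl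
    omega

variable {S}

/-- A module all of whose simple quotients `L(τ)` have `τ ≮ σ` has no maps to modules with
weights `< σ`. -/
lemma hom_eq_zero {V : GMod A} {σ : Idx}
    (hσ : ∀ τ < σ, ∀ f : V.carrier →ₗ[A.carrier] (S.L τ).carrier, f = 0) {Y : GMod A}
    (hY : ∀ ρ, S.HasWt ρ Y.carrier → ρ < σ) (f : V.carrier →ₗ[A.carrier] Y.carrier) : f = 0 := by
  by_contra h0
  obtain ⟨d, hd⟩ := exists_hcomp_ne (N := Y) h0
  have hW := isGSub_range (hcomp_mem (M := V) (N := Y) f d)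
  have : Nontrivial (Y.sub _ hW).carrier :=
    Submodule.nontrivial_iff_ne_bot.mpr fun h => hd (LinearMap.range_eq_bot.mp h)
  obtain ⟨τ, e, g, hg, hgs⟩ := S.exists_to_L (Y.sub _ hW)
  have hτ := hY τ (((wt_L τ).of_surj hgs).of_inj (subι_inj hW))
  let f' : V.carrier →ₗ[A.carrier] (Y.sub _ hW).carrier := (hcomp (M := V) (N := Y) f d).rangeRestrict
  have h1 := hσ τ hτ (g.comp f')
  have := (S.simple τ).1
  obtain ⟨y, hy⟩ := exists_ne (0 : (S.L τ).carrier)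
  obtain ⟨x, rfl⟩ := hgs y
  obtain ⟨v, rfl⟩ := (hcomp (M := V) (N := Y) f d).surjective_rangeRestrict x
  exact hy (LinearMap.congr_fun h1 v)

/-- A non-zero module `V` with `Ext¹(V, ∇̄(π)) = 0` for all `π` has a quotient `Δ(σ)`: take `σ`
minimal such that `L(σ)` is a quotient of `V`, and lift `V → L(σ)` to `Δ(σ)`. -/
lemma exists_to_std {V : GMod A} [Nontrivial V.carrier]
    (hV : ∀ π, ExtZero A.carrier 1 V.carrier (S.pco π).carrier) :
    ∃ (σ : Idx) (d : ℤ), ∃ g ∈ ghomSet V (S.Δ σ) d, Function.Surjective g := by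
  have hne : {τ | ∃ f : V.carrier →ₗ[A.carrier] (S.L τ).carrier, f ≠ 0}.Nonempty := by
    obtain ⟨τ, d, g, -, hg⟩ := S.exists_to_L V
    refine ⟨τ, g, ?_⟩
    rintro rfl
    obtain ⟨y, hy⟩ := @exists_ne _ (S.simple τ).1 (0 : (S.L τ).carrier)
    obtain ⟨x, rfl⟩ := hg y
    exact hy rfl
  obtain ⟨σ, ⟨f, hf⟩, hmin⟩ := WellFounded.has_min (r := ((· < ·) : Idx → Idx → Prop))
    wellFounded_lt _ hne
  have hσ : ∀ τ < σ, ∀ f : V.carrier →ₗ[A.carrier] (S.L τ).carrier, f = 0 := fun τ hτ f =>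
    by_contra fun h => hmin τ ⟨f, h⟩ hτ
  have hL : ∀ τ ≤ σ, ExtZero A.carrier 1 V.carrier (S.L τ).carrier := by
    intro τ hτ
    have hW := isGSub_range (S.socι_mem τ)
    refine (ShortEx.of_inj (S.socι τ) (S.socι_inj τ)).of_lift (hV τ) fun u => ⟨0, ?_⟩
    have hu := hom_eq_zero (Y := (S.pco τ).quo _ hW) hσ
      (fun ρ h => (S.wt_pco_quo h).trans_le hτ) u
    rw [LinearMap.comp_zero]
    exact hu.symm
  have hfd : ∀ Y : GMod A, Module.Finite k Y.carrier → (∀ ρ, S.HasWt ρ Y.carrier → ρ ≤ σ) →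
      ExtZero A.carrier 1 V.carrier Y.carrier := by
    refine S.fd_induction (fun Y h _ => ExtZero.of_subsingleton_right _) ?_
    intro Y τ d g hg hgi ih hY
    have hE := ih fun ρ hρ => hY ρ (hρ.of_surj (quoπ_surj _))
    exact (ShortEx.of_inj g hgi).cov_mid (hL τ (hY τ ((wt_L τ).of_inj hgi))) hE
  have hW := isGSub_ker (S.headπ_mem σ)
  have hE : ExtZero A.carrier 1 V.carrier ((S.Δ σ).sub _ hW).carrier := by
    obtain ⟨N, hN⟩ := S.laur.1
    refine extZero_of_approx fun D => ⟨tail _ (D - N), isGSub_tail _ _, fun x hx i hi =>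
      comp_tail hN hx i (by omega), ?_⟩
    refine hfd _ (finite_quot S.laur _ fun i hi x hx => mem_tail hi hx) fun ρ hρ => ?_
    exact wt_std ((hρ.of_surj (quoπ_surj _)).of_inj (subι_inj hW))
  obtain ⟨d, hd⟩ := exists_hcomp_ne (N := S.L σ) hf
  have hfm := hcomp_mem (M := V) (N := S.L σ) f d
  obtain ⟨l, hl, hlf⟩ := exists_ghom_lift (S.headπ_mem σ) hfm
    ((ShortEx.of_ker (S.headπ σ) (S.headπ_surj σ)).lift hE _)
  refine ⟨σ, _, l, hl, LinearMap.range_eq_top.mp (by_contra fun h => hd ?_)⟩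
  rw [← hlf]
  ext x
  exact S.le_ker_headπ (isGSub_range hl) h ⟨x, rfl⟩

end AHW

end Devissage

section StdFilt

variable {S : AHW A Idx}

open GMod

namespace AHW

/-- The kernel `X` of a surjection `Y ↠ Δ(σ)` has fewer maps to proper costandard modules than
`Y`. -/
lemma sum_finrank_lt {X Y : GMod A} {σ : Idx} {f : X.carrier →ₗ[A.carrier] Y.carrier}
    {g : Y.carrier →ₗ[A.carrier] (S.Δ σ).carrier} (h : ShortEx f g) :
    ∑ π, Module.finrank k (X.carrier →ₗ[A.carrier] (S.pco π).carrier) <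
      ∑ π, Module.finrank k (Y.carrier →ₗ[A.carrier] (S.pco π).carrier) := by
  have := S.finite_pco
  let res : ∀ π, (Y.carrier →ₗ[A.carrier] (S.pco π).carrier) →ₗ[k]
      (X.carrier →ₗ[A.carrier] (S.pco π).carrier) := fun π =>
    { toFun := fun u => u.comp f
      map_add' := fun _ _ => rfl
      map_smul' := fun _ _ => rfl }
  have hres : ∀ π, Function.Surjective (res π) := fun π u => h.extend (S.ext_std_pco π σ) u
  have hrk : ∀ π, Module.finrank k (X.carrier →ₗ[A.carrier] (S.pco π).carrier) +
      Module.finrank k (LinearMap.ker (res π)) =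
      Module.finrank k (Y.carrier →ₗ[A.carrier] (S.pco π).carrier) := fun π => by
    have := (res π).finrank_range_add_finrank_ker
    rwa [LinearMap.range_eq_top.mpr (hres π), finrank_top] at this
  refine Finset.sum_lt_sum (fun π _ => by have := hrk π; omega) ⟨σ, Finset.mem_univ _, ?_⟩
  obtain ⟨f₀, -, hf₀, -⟩ := S.pco_hom σ
  have hpos : 0 < Module.finrank k (LinearMap.ker (res σ)) := by
    rw [Module.finrank_pos_iff]
    refine ⟨⟨⟨f₀.comp g, ?_⟩, 0, fun h0 => hf₀ (LinearMap.ext fun y => ?_)⟩⟩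
    · change (f₀.comp g).comp f = 0
      rw [LinearMap.comp_assoc, h.comp_zero, LinearMap.comp_zero]
    · obtain ⟨x, rfl⟩ := h.surj y
      exact LinearMap.congr_fun (congrArg Subtype.val h0) x
  have := hrk σ
  omega

variable [IsNoetherianRing A.carrier]

/-- A submodule `W` without extensions by proper costandard modules is filtered down to `0` by
standard modules, by induction on `∑ dim hom(W, ∇̄(π))`. -/
lemma chain_of_ext {V : GMod A} {W : Submodule A.carrier V.carrier} (hW : V.IsGSub W)
    (h : ∀ π, ExtZero A.carrier 1 (V.sub W hW).carrier (S.pco π).carrier) :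
    Relation.ReflTransGen (FiltStep V (Set.range S.Δ)) W ⊥ := by
  induction hn : ∑ π, Module.finrank k ((V.sub W hW).carrier →ₗ[A.carrier] (S.pco π).carrier)
    using Nat.strong_induction_on generalizing W with
  | _ n ih =>
    by_cases hbot : W = ⊥
    · rw [hbot]
    have : Nontrivial (V.sub W hW).carrier := Submodule.nontrivial_iff_ne_bot.mpr hbot
    obtain ⟨σ, d, g, hg, hgs⟩ := exists_to_std h
    let W' := (LinearMap.ker g).map (V.subι W hW)
    have hW' : V.IsGSub W' := isGSub_map (subι_mem hW) (isGSub_ker hg)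
    have hle : W' ≤ W := by
      rintro _ ⟨x, -, rfl⟩
      exact x.2
    have hk : LinearMap.ker g = W'.comap (V.subι W hW) :=
      (Submodule.comap_map_eq_of_injective (subι_inj hW) _).symm
    let ι : (V.sub W' hW').carrier →ₗ[A.carrier] (V.sub W hW).carrier := Submodule.inclusion hle
    have hex : ShortEx ι g := by
      refine ⟨Submodule.inclusion_injective hle, hgs, ?_⟩
      rw [hk]
      exact Submodule.range_inclusion _ _ hle
    refine Relation.ReflTransGen.head ⟨hle, hW', S.Δ σ, ⟨σ, rfl⟩, _, SQIso.of_map hW hg hgs hk⟩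
      (ih _ ?_ hW' (fun π => ?_) rfl)
    · rw [← hn]
      exact sum_finrank_lt hex
    · exact hex.contra_left (h π) (S.ext_two (fun τ => S.ext_std_pco π τ) σ)

lemma hasDFilt_of_vanish {V : GMod A} (h : ∀ π, Ext1Vanish V (S.pco π)) : HasDFilt S V := by
  have htop : V.IsGSub ⊤ := isGSub_top
  have hch := chain_of_ext htop fun π => (extZero_of_vanish (h π)).congr_left
    (Submodule.topEquiv (R := A.carrier) (M := V.carrier)).symm
  refine exists_filtBy (s := fun n => Nat.casesOn n ⊤ fun _ => ⊥) rfl (fun i => ?_) fun x hx => ?_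
  · cases i with
    | zero => exact hch
    | succ i => exact Relation.ReflTransGen.refl
  · exact (Submodule.mem_bot A.carrier).mp (hx 1)

end AHW

end StdFilt

/-! ### Finite-dimensional modules `X` with `Ext¹(Δ(π), X) = 0` -/

section CostdFinite

variable {S : AHW A Idx} [IsNoetherianRing A.carrier]

open GMod

namespace AHW

/-- A module with weights `< σ` has no maps to a finite-dimensional module all of whose simple
submodules `L(τ)` have `τ ≮ σ`. -/
lemma hom_eq_zero' {X : GMod A} [Module.Finite k X.carrier] {σ : Idx}
    (hσ : ∀ τ < σ, ∀ f : (S.L τ).carrier →ₗ[A.carrier] X.carrier, f = 0) {Y : GMod A}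
    (hY : ∀ ρ, S.HasWt ρ Y.carrier → ρ < σ) (f : Y.carrier →ₗ[A.carrier] X.carrier) : f = 0 := by
  by_contra h0
  obtain ⟨d, hd⟩ := exists_hcomp_ne (M := Y) (N := X) h0
  have hW := isGSub_range (hcomp_mem (M := Y) (N := X) f d)
  have : Nontrivial (X.sub _ hW).carrier :=
    Submodule.nontrivial_iff_ne_bot.mpr fun h => hd (LinearMap.range_eq_bot.mp h)
  have : IsArtinian A.carrier X.carrier := isArtinian_of_tower k inferInstance
  have : IsArtinian A.carrier (X.sub _ hW).carrier := inferInstanceAs (IsArtinian A.carrier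
    (LinearMap.range (hcomp (M := Y) (N := X) f d)))
  obtain ⟨τ, e, g, hg, hgi⟩ := S.exists_from_L (X.sub _ hW)
  have hτ := hY τ (((wt_L τ).of_inj hgi).of_surj
    (hcomp (M := Y) (N := X) f d).surjective_rangeRestrict)
  have h1 := hσ τ hτ ((X.subι _ hW).comp g)
  obtain ⟨y, hy⟩ := @exists_ne _ (S.simple τ).1 (0 : (S.L τ).carrier)
  refine hy (hgi (subι_inj hW ?_))
  rw [map_zero, map_zero]
  exact LinearMap.congr_fun h1 y

/-- A non-zero finite-dimensional module `X` with `Ext¹(Δ(π), X) = 0` for all `π` has a submodule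
`∇̄(σ)`: take `σ` minimal such that `L(σ)` is a submodule of `X`, and extend `L(σ) → X` to
`∇̄(σ)`. -/
lemma exists_from_pco {X : GMod A} [Nontrivial X.carrier] [Module.Finite k X.carrier]
    (hX : ∀ π, ExtZero A.carrier 1 (S.Δ π).carrier X.carrier) :
    ∃ (σ : Idx) (d : ℤ), ∃ g ∈ ghomSet (S.pco σ) X d, Function.Injective g := by
  have hart : IsArtinian A.carrier X.carrier := isArtinian_of_tower k inferInstance
  have hne : {τ | ∃ f : (S.L τ).carrier →ₗ[A.carrier] X.carrier, f ≠ 0}.Nonempty := by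
    obtain ⟨τ, d, g, -, hg⟩ := S.exists_from_L X
    refine ⟨τ, g, ?_⟩
    rintro rfl
    obtain ⟨y, hy⟩ := @exists_ne _ (S.simple τ).1 (0 : (S.L τ).carrier)
    exact hy (hg rfl)
  obtain ⟨σ, ⟨f, hf⟩, hmin⟩ := WellFounded.has_min (r := ((· < ·) : Idx → Idx → Prop))
    wellFounded_lt _ hne
  have hσ : ∀ τ < σ, ∀ f : (S.L τ).carrier →ₗ[A.carrier] X.carrier, f = 0 := fun τ hτ f =>
    by_contra fun h => hmin τ ⟨f, h⟩ hτ
  have hL : ∀ τ < σ, ExtZero A.carrier 1 (S.L τ).carrier X.carrier := by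
    intro τ hτ
    have hW := isGSub_ker (S.headπ_mem τ)
    refine (ShortEx.of_ker (S.headπ τ) (S.headπ_surj τ)).of_extend (hX τ) fun u => ⟨0, ?_⟩
    have hu := hom_eq_zero' (Y := (S.Δ τ).sub _ hW) hσ
      (fun ρ h => (wt_std (h.of_inj (subι_inj hW))).trans_lt hτ) u
    rw [LinearMap.zero_comp]
    exact hu.symm
  have hfd : ∀ Y : GMod A, Module.Finite k Y.carrier → (∀ ρ, S.HasWt ρ Y.carrier → ρ < σ) →
      ExtZero A.carrier 1 Y.carrier X.carrier := by
    refine S.fd_induction (fun Y h _ => ExtZero.of_subsingleton_left _) ?_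
    intro Y τ d g hg hgi ih hY
    have hE := ih fun ρ hρ => hY ρ (hρ.of_surj (quoπ_surj _))
    exact (ShortEx.of_inj g hgi).contra_mid (hL τ (hY τ ((wt_L τ).of_inj hgi))) hE
  have hW := isGSub_range (S.socι_mem σ)
  have := S.finite_pco
  have hfin : Module.Finite k ((S.pco σ).quo _ hW).carrier :=
    inferInstanceAs (Module.Finite k ((S.pco σ).carrier ⧸
      ((LinearMap.range (S.socι σ)).restrictScalars k)))
  have hE := hfd ((S.pco σ).quo _ hW) hfin fun ρ h => S.wt_pco_quo h
  obtain ⟨d, hd⟩ := exists_hcomp_ne (M := S.L σ) (N := X) hf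
  obtain ⟨g, hg, hgf⟩ := exists_ghom_ext (S.socι_mem σ) (hcomp_mem (M := S.L σ) (N := X) f d)
    ((ShortEx.of_inj (S.socι σ) (S.socι_inj σ)).extend hE _)
  refine ⟨σ, _, g, hg, LinearMap.ker_eq_bot.mp (by_contra fun h => hd ?_)⟩
  rw [← hgf]
  ext x
  exact S.range_socι_le (isGSub_ker hg) h ⟨x, rfl⟩

/-- A finite-dimensional subquotient `W/U` with `Ext¹(Δ(π), W/U) = 0` for all `π` is filtered by
proper costandard modules. -/
lemma chain_of_finite {V : GMod A} {W U : Submodule A.carrier V.carrier} (hW : V.IsGSub W)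
    (hU : V.IsGSub U) (hle : U ≤ W) (hfin : Module.Finite k (sqMod V W U))
    (h : ∀ π, ExtZero A.carrier 1 (S.Δ π).carrier (sqMod V W U)) :
    Relation.ReflTransGen (FiltStep V (Set.range S.pco)) W U := by
  induction U using WellFoundedGT.induction with
  | _ U ih =>
    by_cases heq : W ≤ U
    · rw [le_antisymm heq hle]
    have hU' : (V.sub W hW).IsGSub (U.comap (V.subι W hW)) := isGSub_comap (subι_mem hW) hU
    let X := (V.sub W hW).quo _ hU'
    have hXf : Module.Finite k X.carrier := hfin
    have hXn : Nontrivial X.carrier := by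
      rw [← not_subsingleton_iff_nontrivial]
      exact fun hs => heq (subsingleton_sq.mp hs)
    obtain ⟨σ, d, g, hg, hgi⟩ := exists_from_pco (S := S) (X := X) h
    let π := (V.sub W hW).quoπ _ hU'
    have hπ : π ∈ ghomSet (V.sub W hW) X 0 := quoπ_mem hU'
    let W₁ := ((LinearMap.range g).comap π).map (V.subι W hW)
    have hW₁ : V.IsGSub W₁ := isGSub_map (subι_mem hW) (isGSub_comap hπ (isGSub_range hg))
    have hc : W₁.comap (V.subι W hW) = (LinearMap.range g).comap π :=
      Submodule.comap_map_eq_of_injective (subι_inj hW) _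
    have hle₁ : W₁ ≤ W := by
      rintro _ ⟨x, -, rfl⟩
      exact x.2
    have hUW : U ≤ W₁ := fun x hx => by
      let w : (V.sub W hW).carrier := ⟨x, hle hx⟩
      have hw : w ∈ LinearMap.ker π := by rw [ker_quoπ]; exact hx
      exact ⟨w, ⟨0, (map_zero g).trans hw.symm⟩, rfl⟩
    -- the projection `W₁ → W₁/U ≅ ∇̄(σ)`
    let ι : (V.sub W₁ hW₁).carrier →ₗ[A.carrier] (V.sub W hW).carrier := Submodule.inclusion hle₁
    have hι : ι ∈ ghomSet (V.sub W₁ hW₁) (V.sub W hW) 0 := fun i x hx => by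
      rw [add_zero]
      exact hx
    have hr : LinearMap.range (π.comp ι) ≤ LinearMap.range g := by
      rintro _ ⟨x, rfl⟩
      have hx : ι x ∈ W₁.comap (V.subι W hW) := x.2
      rw [hc] at hx
      exact hx
    obtain ⟨u, hu⟩ := exists_factor hgi hr
    have hum := ghom_of_comp_inj hg hgi (h := u) (hu ▸ ghom_comp hι hπ)
    have hus : Function.Surjective u := fun y => by
      obtain ⟨w, hw⟩ := quoπ_surj hU' (g y)
      have hw₁ : w ∈ W₁.comap (V.subι W hW) := by rw [hc]; exact ⟨y, hw.symm⟩
      exact ⟨⟨w.1, hw₁⟩, hgi ((LinearMap.congr_fun hu _).trans hw)⟩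
    have huk : LinearMap.ker u = U.comap (V.subι W₁ hW₁) := by
      have h1 : LinearMap.ker (g.comp u) = LinearMap.ker u := by
        rw [LinearMap.ker_comp, LinearMap.ker_eq_bot.mpr hgi]; rfl
      rw [← h1, hu, LinearMap.ker_comp, ker_quoπ]
      rfl
    have hlt : U < W₁ := by
      refine hUW.lt_of_ne fun heq => ?_
      obtain ⟨f₀, -, hf₀, -⟩ := S.pco_hom σ
      refine hf₀ (LinearMap.ext fun y => ?_)
      obtain ⟨x, hx⟩ := hus (f₀ y)
      have : x ∈ LinearMap.ker u := by
        rw [huk]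
        exact heq.ge x.2
      rw [← hx]
      exact this
    let p : sqMod V W U →ₗ[A.carrier] sqMod V W W₁ := Submodule.mapQ _ _ LinearMap.id
      (Submodule.comap_mono hUW)
    have hp : Function.Surjective p := fun y => by
      obtain ⟨y, rfl⟩ := Submodule.mkQ_surjective _ y
      exact ⟨Submodule.mkQ _ y, rfl⟩
    refine (ih W₁ hlt hW₁ hle₁ ?_ fun π' => ?_).tail
      ⟨hUW, hU, S.pco σ, ⟨σ, rfl⟩, _, SQIso.of_map hW₁ hum hus huk⟩
    · exact Module.Finite.of_surjective (p.restrictScalars k) hp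
    · have hex : ShortEx (g : (S.pco σ).carrier →ₗ[A.carrier] sqMod V W U) p := by
        refine ⟨hgi, hp, ?_⟩
        ext x
        obtain ⟨w, rfl⟩ := quoπ_surj hU' x
        have h1 : w ∈ W₁.comap (V.subι W hW) ↔ w ∈ (LinearMap.range g).comap π := by rw [hc]
        exact h1.symm.trans (Submodule.Quotient.mk_eq_zero _).symm
      exact hex.cov_right (h π') (S.ext_two (fun τ => S.ext_std_pco σ τ) π')

end AHW

end CostdFinite

/-! ### Truncation of modules `V` with `Ext¹(Δ(π), V) = 0` -/

section Truncation

variable (S : AHW A Idx)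

open GMod

namespace AHW

/-- The weight `σ` occurs in the submodule `W` of `X` in degrees `≥ d` only. -/
def WtFrom (X : GMod A) (W : Submodule A.carrier X.carrier) (σ : Idx) (d : ℤ) : Prop :=
  ∀ e < d, ∀ f ∈ ghomSet (S.P σ) X e, LinearMap.range f ≤ W → f = 0

variable {S}

lemma WtFrom.mono {X : GMod A} {W W' : Submodule A.carrier X.carrier} {σ : Idx} {d d' : ℤ}
    (h : S.WtFrom X W' σ d') (hW : W ≤ W') (hd : d ≤ d') : S.WtFrom X W σ d :=
  fun e he f hf hr => h e (he.trans_le hd) f hf (hr.trans hW)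

variable [IsNoetherianRing A.carrier]

lemma WtFrom.eq_zero {X : GMod A} {W : Submodule A.carrier X.carrier} {σ : Idx} {d : ℤ}
    (h : S.WtFrom X W σ d) (hW : X.IsGSub W) {e : ℤ} (he : e < d)
    {f : (S.P σ).carrier →ₗ[A.carrier] (X.sub W hW).carrier}
    (hf : f ∈ ghomSet (S.P σ) (X.sub W hW) e) : f = 0 := by
  have h1 : (X.subι W hW).comp f = 0 := by
    refine h _ (by omega) _ (ghom_comp hf (subι_mem hW)) ?_
    rintro _ ⟨x, rfl⟩
    exact (f x).2
  ext x
  refine subι_inj hW ?_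
  rw [LinearMap.zero_apply, map_zero]
  exact LinearMap.congr_fun h1 x

variable (S) in
/-- A graded submodule `W'` has a largest graded submodule `W` in which `τ` occurs in degrees `≥ d`
only. The quotient `W'/W` lives in bounded degrees, and all its non-zero graded submodules have
weight `τ`. -/
lemma exists_wtFrom_max (X : GMod A) (τ : Idx) (d : ℤ) :
    ∃ D : ℤ, ∀ W' : Submodule A.carrier X.carrier, X.IsGSub W' →
      ∃ W ≤ W', X.IsGSub W ∧ S.WtFrom X W τ d ∧
        (∀ i, D ≤ i → ∀ x ∈ X.grading i, x ∈ W' → x ∈ W) ∧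
        ∀ U, X.IsGSub U → W < U → U ≤ W' →
          ∃ f : (S.P τ).carrier →ₗ[A.carrier] X.carrier,
            LinearMap.range f ≤ U ∧ ¬ LinearMap.range f ≤ W := by
  obtain ⟨N, hN⟩ := S.laur.1
  obtain ⟨c, hc⟩ := exists_genbound (S.P τ)
  refine ⟨c + d - N, fun W' hW' => ?_⟩
  obtain ⟨W, ⟨hle, hW, hwt⟩, hmax⟩ := WellFounded.has_min
    (r := ((· > ·) : Submodule A.carrier X.carrier → _ → Prop)) wellFounded_gt
    {W | W ≤ W' ∧ X.IsGSub W ∧ S.WtFrom X W τ d}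
    ⟨⊥, bot_le, isGSub_bot, fun e _ f _ h => LinearMap.range_eq_bot.mp (le_bot_iff.mp h)⟩
  refine ⟨W, hle, hW, hwt, fun i hi x hx hxW' => ?_, fun U hU hlt hUW' => ?_⟩
  · -- adding elements of high degree does not affect maps from `P(τ)` in degrees `< d`
    let T := Submodule.span A.carrier ({x} : Set X.carrier)
    have hT : X.IsGSub T := isGSub_span fun y hy => ⟨i, by rwa [Set.mem_singleton_iff.mp hy]⟩
    have hTtail : T ≤ X.tail (c + d - N) := by
      rw [Submodule.span_singleton_le_iff_mem]
      exact mem_tail hi hx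
    have hTW' : T ≤ W' := by rwa [Submodule.span_singleton_le_iff_mem]
    have hsup : S.WtFrom X (W ⊔ T) τ d := by
      intro e he f hf hr
      refine hwt e he f hf ?_
      have h0 : (X.quoπ W hW).comp f = 0 := by
        refine hc _ fun j hj y hy => ?_
        obtain ⟨w, hw, t, ht, hwt⟩ := Submodule.mem_sup.mp (hr ⟨y, rfl⟩)
        have h1 : X.comp (j + e) (f y) = f y := comp_same (hf _ _ hy)
        have h2 : f y ∈ W := by
          rw [← h1, ← hwt, map_add, comp_tail hN (hTtail ht) _ (by omega), add_zero]
          exact isGSub_iff.mp hW _ hw _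
        have h3 : f y ∈ LinearMap.ker (X.quoπ W hW) := by rwa [ker_quoπ]
        exact h3
      rintro _ ⟨y, rfl⟩
      have h3 : f y ∈ LinearMap.ker (X.quoπ W hW) := LinearMap.congr_fun h0 y
      rwa [ker_quoπ] at h3
    have heq := le_sup_left.eq_or_lt.resolve_right
      (hmax (W ⊔ T) ⟨sup_le hle hTW', isGSub_sup hW hT, hsup⟩)
    rw [heq]
    exact Submodule.mem_sup_right (Submodule.mem_span_singleton_self x)
  · have hU' : ¬ S.WtFrom X U τ d := fun h => hmax U ⟨hUW', hU, h⟩ hlt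
    unfold WtFrom at hU'
    push Not at hU'
    obtain ⟨e, he, f, hf, hr, h0⟩ := hU'
    exact ⟨f, hr, fun h => h0 (hwt e he f hf h)⟩

/-- If every graded submodule `U` with `W < U ≤ W'` admits a map from `P(τ)` with image not contained
in `W`, then a module with a non-zero map to `W'/W` has weight `τ`. -/
lemma hasWt_of_max {X : GMod A} {τ : Idx} {W W' : Submodule A.carrier X.carrier} (hle : W ≤ W')
    (hW' : X.IsGSub W')
    (h : ∀ U, X.IsGSub U → W < U → U ≤ W' →
      ∃ f : (S.P τ).carrier →ₗ[A.carrier] X.carrier,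
        LinearMap.range f ≤ U ∧ ¬ LinearMap.range f ≤ W)
    (hQ : (X.sub W' hW').IsGSub (W.comap (X.subι W' hW'))) {Z : GMod A} {e : ℤ}
    {u : Z.carrier →ₗ[A.carrier] ((X.sub W' hW').quo _ hQ).carrier}
    (hu : u ∈ ghomSet Z ((X.sub W' hW').quo _ hQ) e) (h0 : u ≠ 0) : S.HasWt τ Z.carrier := by
  let π := (X.sub W' hW').quoπ _ hQ
  let U := ((LinearMap.range u).comap π).map (X.subι W' hW')
  have hUW' : U ≤ W' := by
    rintro _ ⟨x, -, rfl⟩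
    exact x.2
  have hker : ∀ w : (X.sub W' hW').carrier, π w = 0 ↔ X.subι W' hW' w ∈ W := fun w => by
    rw [← LinearMap.mem_ker, ker_quoπ, Submodule.mem_comap]
  have hWU : W < U := by
    refine lt_of_le_not_ge (fun x hx => ?_) fun hUW => h0 (LinearMap.ext fun z => ?_)
    · let w : (X.sub W' hW').carrier := ⟨x, hle hx⟩
      exact ⟨w, ⟨0, (map_zero u).trans ((hker w).mpr hx).symm⟩, rfl⟩
    · obtain ⟨w, hw⟩ := quoπ_surj hQ (u z)
      have : X.subι W' hW' w ∈ U := ⟨w, ⟨z, hw.symm⟩, rfl⟩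
      exact hw.symm.trans ((hker w).mpr (hUW this))
  obtain ⟨f, hfU, hfW⟩ := h U (isGSub_map (subι_mem hW')
    (isGSub_comap (quoπ_mem hQ) (isGSub_range hu))) hWU hUW'
  obtain ⟨f', rfl⟩ := exists_factor (subι_inj hW') (f := f)
    (by rw [range_subι]; exact hfU.trans hUW')
  have hr : ∀ y, π (f' y) ∈ LinearMap.range u := fun y => by
    obtain ⟨w, hw, hwy⟩ := hfU ⟨y, rfl⟩
    have : w = f' y := subι_inj hW' hwy
    exact this ▸ hw
  have := S.projective_P τ
  obtain ⟨l, hl⟩ := Module.projective_lifting_property u.rangeRestrict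
    ((π.comp f').codRestrict _ hr) u.surjective_rangeRestrict
  refine ⟨l, ?_⟩
  rintro rfl
  refine hfW ?_
  rintro _ ⟨y, rfl⟩
  refine (hker _).mp ?_
  exact (congrArg Subtype.val (LinearMap.congr_fun hl y)).symm.trans (map_zero u)

end AHW

end Truncation

section Truncation

variable {S : AHW A Idx}

open GMod

namespace AHW

variable (S) in
lemma exists_low_P : ∃ b : ℤ, ∀ ρ, ∀ i < b, ∀ x ∈ (S.P ρ).grading i, x = 0 := by
  choose b hb using fun ρ => exists_low S.laur (S.P ρ)
  obtain ⟨c, hc⟩ := (Set.finite_range b).bddBelow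
  exact ⟨c, fun ρ i hi => hb ρ i (hi.trans_le (hc ⟨ρ, rfl⟩))⟩

variable [IsNoetherianRing A.carrier]

/-- The step from `W'` to `W` preserves the vanishing of extensions: a non-zero homogeneous map
`u : Δ(ρ) → W'/W` has bounded degree and forces `τ ≤ ρ`, and its lift `P(ρ) → W'` vanishes for
`τ < ρ` and factors through `Δ(τ)` for `τ = ρ`, because the weights `σ > τ` occur in `W'` in high
degrees only. -/
lemma extZero_of_max {X : GMod A} {τ : Idx} {c b D d : ℤ}
    (hc : ∀ (X : GMod A) (e : ℤ),
      (∀ σ, τ < σ → ∀ d < e + c, ∀ f ∈ ghomSet (S.P σ) X d, f = 0) →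
      ∀ h ∈ ghomSet (S.P τ) X e, LinearMap.ker (S.stdπ τ) ≤ LinearMap.ker h)
    (hb : ∀ ρ, ∀ i < b, ∀ x ∈ (S.P ρ).grading i, x = 0)
    {W W' : Submodule A.carrier X.carrier} (hle : W ≤ W') (hW : X.IsGSub W) (hW' : X.IsGSub W')
    (hwt : ∀ σ, τ < σ → S.WtFrom X W' σ d) (hd : D - b ≤ d) (hdc : D - b + c ≤ d)
    (hD : ∀ i, D ≤ i → ∀ x ∈ X.grading i, x ∈ W' → x ∈ W)
    (hmax : ∀ U, X.IsGSub U → W < U → U ≤ W' →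
      ∃ f : (S.P τ).carrier →ₗ[A.carrier] X.carrier,
        LinearMap.range f ≤ U ∧ ¬ LinearMap.range f ≤ W)
    {ρ : Idx} (hE : ExtZero A.carrier 1 (S.Δ ρ).carrier W') :
    ExtZero A.carrier 1 (S.Δ ρ).carrier W := by
  have hQ : (X.sub W' hW').IsGSub (W.comap (X.subι W' hW')) := isGSub_comap (subι_mem hW') hW
  let Q := (X.sub W' hW').quo _ hQ
  let π := (X.sub W' hW').quoπ _ hQ
  have hπ : π ∈ ghomSet (X.sub W' hW') Q 0 := quoπ_mem hQ
  have key : ∀ (e : ℤ) (u : (S.Δ ρ).carrier →ₗ[A.carrier] Q.carrier), u ∈ ghomSet (S.Δ ρ) Q e →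
      ∃ v : (S.Δ ρ).carrier →ₗ[A.carrier] (X.sub W' hW').carrier, π.comp v = u := by
    intro e u hu
    by_cases h0 : u = 0
    · exact ⟨0, by rw [h0, LinearMap.comp_zero]⟩
    have hτρ : τ ≤ ρ := wt_std (hasWt_of_max hle hW' hmax hQ hu h0)
    have hus := ghom_comp (S.stdπ_mem ρ) hu
    rw [zero_add] at hus
    have hus0 : u.comp (S.stdπ ρ) ≠ 0 := fun h => h0 (LinearMap.ext fun y => by
      obtain ⟨x, rfl⟩ := S.stdπ_surj ρ y
      exact LinearMap.congr_fun h x)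
    have he : e < D - b := by
      by_contra! he
      refine hus0 (ghom_ext fun i x hx => ?_)
      by_cases hi : i < b
      · rw [hb ρ i hi x hx, map_zero, map_zero]
      · obtain ⟨w, hw, hwx⟩ := exists_ghom_preimage (i := i + e) hπ (quoπ_surj hQ)
          (mem_of_eq (hus i x hx) (add_zero _).symm)
        have h1 : w ∈ LinearMap.ker π := by
          rw [ker_quoπ]
          exact hD (i + e) (by omega) w.1 hw w.2
        exact hwx.symm.trans h1
    obtain ⟨h, hh, hhu⟩ := exists_ghom_lift_P hπ (quoπ_surj hQ) hus
    rw [sub_zero] at hh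
    rcases hτρ.eq_or_lt with rfl | hlt
    · obtain ⟨v, hv⟩ := exists_descend (S.stdπ_surj τ)
        (hc _ e (fun σ hσ d' hd' f hf => (hwt σ hσ).eq_zero hW' (by omega) hf) h hh)
      refine ⟨v, LinearMap.ext fun y => ?_⟩
      obtain ⟨x, rfl⟩ := S.stdπ_surj τ y
      exact (congrArg π (LinearMap.congr_fun hv x)).trans (LinearMap.congr_fun hhu x)
    · refine absurd ?_ hus0
      rw [← hhu, (hwt ρ hlt).eq_zero hW' (by omega) hh, LinearMap.comp_zero]
  have hex : ExtZero A.carrier 1 (S.Δ ρ).carrier (W.comap W'.subtype) := by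
    refine (ShortEx.of_mkQ (W.comap W'.subtype)).of_lift hE fun u => ?_
    obtain ⟨T, hT⟩ := exists_hcomp_sum (M := S.Δ ρ) (N := Q) u
    choose v hv using fun e => key e _ (hcomp_mem (M := S.Δ ρ) (N := Q) u e)
    refine ⟨∑ e ∈ T, v e, LinearMap.ext fun y => ?_⟩
    have h1 : ∀ e, π (v e y) = hcomp (M := S.Δ ρ) (N := Q) u e y :=
      fun e => LinearMap.congr_fun (hv e) y
    have h2 : π ((∑ e ∈ T, v e) y) = ∑ e ∈ T, hcomp (M := S.Δ ρ) (N := Q) u e y := by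
      rw [LinearMap.sum_apply, map_sum]
      exact Finset.sum_congr rfl fun e _ => h1 e
    refine h2.trans ?_
    rw [← LinearMap.sum_apply, hT]
    rfl
  exact hex.congr_right (Submodule.comapSubtypeEquivOfLe hle)

/-- A module `X` with `Ext¹(Δ(π), X) = 0` for all `π` has submodules of the same kind and of finite
codimension in which all weights occur in arbitrarily high degrees only. The weights are treated
one at a time, from the largest to the smallest ones. -/
lemma exists_trunc {X : GMod A} (hX : ∀ π, ExtZero A.carrier 1 (S.Δ π).carrier X.carrier) (d : ℤ) :
    ∃ W, X.IsGSub W ∧ (∀ π, ExtZero A.carrier 1 (S.Δ π).carrier W) ∧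
      Module.Finite k (X.carrier ⧸ W) ∧ ∀ σ, S.WtFrom X W σ d := by
  let Claim : Set Idx → Prop := fun Υ => ∀ d : ℤ, ∃ W, X.IsGSub W ∧
    (∀ π, ExtZero A.carrier 1 (S.Δ π).carrier W) ∧
      Module.Finite k (X.carrier ⧸ W) ∧ ∀ σ ∈ Υ, S.WtFrom X W σ d
  have h0 : Claim ∅ := fun d => by
    have : Subsingleton (X.carrier ⧸ (⊤ : Submodule A.carrier X.carrier)) :=
      Submodule.Quotient.subsingleton_iff.mpr rfl
    exact ⟨⊤, isGSub_top, fun π => (hX π).congr_right Submodule.topEquiv.symm, inferInstance,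
      fun σ h => h.elim⟩
  obtain ⟨Υ, hΥ, hmaxΥ⟩ := WellFounded.has_min (r := ((· > ·) : Set Idx → Set Idx → Prop))
    wellFounded_gt {Υ | Claim Υ} ⟨∅, h0⟩
  have huniv : Υ = Set.univ := by
    by_contra hne
    obtain ⟨τ, hτ, hmaxτ⟩ := WellFounded.has_min (r := ((· > ·) : Idx → Idx → Prop))
      wellFounded_gt Υᶜ (Set.nonempty_compl.mpr hne)
    have hτΥ : ∀ σ, τ < σ → σ ∈ Υ := fun σ h => by_contra fun h' => hmaxτ σ h' h
    refine hmaxΥ (insert τ Υ) ?_ (Set.ssubset_insert hτ)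
    intro d
    obtain ⟨c, hc⟩ := S.exists_factor_const τ
    obtain ⟨b, hb⟩ := S.exists_low_P
    obtain ⟨D, hD⟩ := S.exists_wtFrom_max X τ d
    obtain ⟨W', hW', hE, hfin, hwt⟩ := hΥ (max d (max (D - b) (D - b + c)))
    obtain ⟨W, hle, hW, hwtτ, hDW, hmax⟩ := hD W' hW'
    refine ⟨W, hW, fun ρ => extZero_of_max hc hb hle hW hW' (fun σ hσ => hwt σ (hτΥ σ hσ))
      (by omega) (by omega) hDW hmax (hE ρ), ?_, ?_⟩
    · have : Module.Finite k (X.quo W' hW').carrier := hfin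
      obtain ⟨D', hD'⟩ := exists_high S.laur (X.quo W' hW')
      refine finite_quot S.laur X (D := max D D') fun i hi x hx => hDW i (by omega) x hx ?_
      have h1 : x ∈ LinearMap.ker (X.quoπ W' hW') := hD' i (by omega) _ ⟨x, hx, rfl⟩
      rwa [ker_quoπ] at h1
    · rintro σ (rfl | hσ)
      · exact hwtτ
      · exact (hwt σ hσ).mono hle (by omega)
  subst huniv
  obtain ⟨W, h1, h2, h3, h4⟩ := hΥ d
  exact ⟨W, h1, h2, h3, fun σ => h4 σ trivial⟩

variable (S) in
/-- A graded submodule in which all weights occur in degrees `≥ d` only lives in degrees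
`≥ b + d`. -/
lemma exists_wt_bound : ∃ b : ℤ, ∀ (X : GMod A) (W : Submodule A.carrier X.carrier) (d : ℤ),
    X.IsGSub W → (∀ σ, S.WtFrom X W σ d) → ∀ i < b + d, ∀ x ∈ X.grading i, x ∈ W → x = 0 := by
  choose b hb using fun ρ => exists_low S.laur (S.L ρ)
  obtain ⟨c, hc⟩ := (Set.finite_range b).bddBelow
  refine ⟨c, fun X W d hW hwt i hi x hx hxW => by_contra fun h0 => ?_⟩
  let T := Submodule.span A.carrier ({x} : Set X.carrier)
  have hT : X.IsGSub T := isGSub_span fun y hy => ⟨i, by rwa [Set.mem_singleton_iff.mp hy]⟩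
  have hTW : T ≤ W := by rwa [Submodule.span_singleton_le_iff_mem]
  let x' : (X.sub T hT).carrier := ⟨x, Submodule.mem_span_singleton_self x⟩
  have : Nontrivial (X.sub T hT).carrier := ⟨x', 0, fun h => h0 (congrArg Subtype.val h)⟩
  obtain ⟨τ, δ, g, hg, hgs⟩ := S.exists_to_L (X.sub T hT)
  obtain ⟨p, hp, -⟩ := S.cover τ
  obtain ⟨l, hl, hlp⟩ := exists_ghom_lift_P hg hgs (ghom_of_hom p)
  have hl0 : l ≠ 0 := by
    rintro rfl
    obtain ⟨y, hy⟩ := @exists_ne _ (S.simple τ).1 (0 : (S.L τ).carrier)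
    obtain ⟨z, rfl⟩ := hp y
    refine hy ?_
    rw [← hlp, LinearMap.comp_zero]
    rfl
  have hgx : g x' ≠ 0 := by
    intro h
    obtain ⟨y, hy⟩ := @exists_ne _ (S.simple τ).1 (0 : (S.L τ).carrier)
    obtain ⟨⟨z, hz⟩, rfl⟩ := hgs y
    obtain ⟨a, rfl⟩ := Submodule.mem_span_singleton.mp hz
    refine hy ?_
    have h1 : g (a • x') = a • g x' := map_smul g a x'
    rw [h, smul_zero] at h1
    exact h1
  have h1 : c ≤ i + δ := by
    by_contra! h
    exact hgx (hb τ _ (h.trans_le (hc ⟨τ, rfl⟩)) _ (hg i x' hx))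
  have hwt' : S.WtFrom X T τ d := (hwt τ).mono hTW le_rfl
  exact hl0 (hwt'.eq_zero hT (by omega) hl)

/-- A module `V` with `Ext¹(Δ(π), V) = 0` for all `π` has a filtration by proper costandard
modules. -/
theorem hasPCFilt_of_vanish {V : GMod A} (hV : ∀ π, Ext1Vanish (S.Δ π) V) : HasPCFilt S V := by
  obtain ⟨b, hb⟩ := S.exists_wt_bound
  let Good := {W : Submodule A.carrier V.carrier //
    V.IsGSub W ∧ ∀ π, ExtZero A.carrier 1 (S.Δ π).carrier W}
  have step : ∀ (n : ℕ) (W : Good), ∃ U : Good, U.1 ≤ W.1 ∧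
      Module.Finite k (sqMod V W.1 U.1) ∧ ∀ i < (n : ℤ), ∀ x ∈ V.grading i, x ∈ U.1 → x = 0 := by
    rintro n ⟨W, hW, hE⟩
    obtain ⟨U, hU, hUE, hUf, hUw⟩ := exists_trunc (S := S) (X := V.sub W hW) hE (n - b)
    have hc : (U.map (V.subι W hW)).comap (V.subι W hW) = U :=
      Submodule.comap_map_eq_of_injective (subι_inj hW) U
    refine ⟨⟨U.map (V.subι W hW), isGSub_map (subι_mem hW) hU, fun π => (hUE π).congr_right
      (Submodule.equivMapOfInjective _ (subι_inj hW) U)⟩, ?_, ?_, ?_⟩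
    · rintro _ ⟨x, -, rfl⟩
      exact x.2
    · change Module.Finite k ((V.sub W hW).carrier ⧸ (U.map (V.subι W hW)).comap (V.subι W hW))
      rw [hc]
      exact hUf
    · rintro i hi _ hx ⟨x, hxU, rfl⟩
      rw [hb _ U _ hU hUw i (by omega) x hx hxU, map_zero]
  choose next hle hfin hdeg using step
  have htop : ∀ π, ExtZero A.carrier 1 (S.Δ π).carrier (⊤ : Submodule A.carrier V.carrier) :=
    fun π => (extZero_of_vanish (hV π)).congr_right Submodule.topEquiv.symm
  let s : ℕ → Good := fun n => Nat.rec ⟨⊤, isGSub_top, htop⟩ next n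
  refine exists_filtBy (s := fun n => (s n).1) rfl (fun n => ?_) fun x hx => ?_
  · refine chain_of_finite (s n).2.1 (s (n + 1)).2.1 (hle n (s n)) (hfin n (s n)) fun π => ?_
    refine (ShortEx.of_mkQ ((s (n + 1)).1.comap (s n).1.subtype)).cov_right ((s n).2.2 π) ?_
    have h1 := S.ext_two (s (n + 1)).2.2 π
    exact h1.congr_right (Submodule.comapSubtypeEquivOfLe (hle n (s n))).symm
  · refine eq_zero_of_comp fun i => ?_
    refine hdeg (i + 1).toNat (s (i + 1).toNat) i (by omega) _ (comp_mem _ _ _) ?_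
    exact isGSub_iff.mp (s ((i + 1).toNat + 1)).2.1 _ (hx ((i + 1).toNat + 1)) i

end AHW

end Truncation

/-- Homological characterization of `Δ`- and `∇̄`-filtered
modules: `V` has a `Δ`-filtration iff `ext¹(V, ∇̄(π)) = 0` for all `π`, and `V`
has a `∇̄`-filtration iff `ext¹(Δ(π), V) = 0` for all `π`. -/
theorem homological_characterization_of_filtered_modules
    {k : Type} [Field k] (A : GAlg k)
    (Idx : Type) [Fintype Idx] [PartialOrder Idx] (S : AHW A Idx)
    (V : GMod A) :
    (HasDFilt S V ↔ ∀ π : Idx, Ext1Vanish V (S.pco π)) ∧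
    (HasPCFilt S V ↔ ∀ π : Idx, Ext1Vanish (S.Δ π) V) := by
  have := S.noeth
  refine ⟨⟨fun h => vanish_of_dFilt S h, fun h => ?_⟩, fun h => vanish_of_pcFilt S h, fun h => ?_⟩
  · exact AHW.hasDFilt_of_vanish h
  · exact AHW.hasPCFilt_of_vanish h
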